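/- arXiv:2108.13379 — 3 statements merged into one kernel-verified Lean document; each statement's English description precedes it below -/
import Mathlib

section
/- Let g be a C² field of invertible symmetric 4×4 real matrices on an open set Ω ⊆ ℝ^{1+3}, let φ ∈ C¹(Ω;ℝ) and 𝒢 = (𝒢^0,…,𝒢^3) ∈ C¹(Ω;ℝ⁴). Assume: (i) the generalized wave coordinate condition (g^{-1})^{αβ}∂_α g_{βμ} − ½(g^{-1})^{αβ}∂_μ g_{αβ} = −g_{μν}𝒢^ν holds on Ω for every μ; and (ii) the reduced Einstein–scalar field equations Ric_{μν} = 2 ∂_μφ ∂_νφ hold on Ω for all μ,ν, where Ric is the coordinate Ricci tensor of g. Then for all μ,ν ∈ {0,1,2,3} one has the identity ⧠̃_g g_{μν} = P(∂_μg,∂_νg) + Q_{μν}(∂g,∂g) + T_{μν}(∂φ,∂φ) + G_{μν}(g,𝒢) on Ω, with P, Q, T, G the explicit expressions given in the context. -/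
open MeasureTheory

noncomputable def pd (μ : Fin 4) (f : (Fin 4 → ℝ) → ℝ) (x : Fin 4 → ℝ) : ℝ :=
  fderiv ℝ f x (Pi.single μ 1)

noncomputable def pd3 (i : Fin 3) (f : (Fin 3 → ℝ) → ℝ) (x : Fin 3 → ℝ) : ℝ :=
  fderiv ℝ f x (Pi.single i 1)

noncomputable def rad (p : Fin 4 → ℝ) : ℝ := Real.sqrt (∑ i : Fin 3, (p i.succ) ^ 2)

noncomputable def rad3 (y : Fin 3 → ℝ) : ℝ := Real.sqrt (∑ i : Fin 3, (y i) ^ 2)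

noncomputable def spt (t : ℝ) (y : Fin 3 → ℝ) : Fin 4 → ℝ := ![t, y 0, y 1, y 2]

noncomputable def minkVF : Fin 11 → (Fin 4 → ℝ) → Fin 4 → ℝ :=
  ![fun _ => Pi.single 0 1,
    fun _ => Pi.single 1 1,
    fun _ => Pi.single 2 1,
    fun _ => Pi.single 3 1,
    fun p => p 1 • (Pi.single 2 1 : Fin 4 → ℝ) - p 2 • (Pi.single 1 1 : Fin 4 → ℝ),
    fun p => p 1 • (Pi.single 3 1 : Fin 4 → ℝ) - p 3 • (Pi.single 1 1 : Fin 4 → ℝ),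
    fun p => p 2 • (Pi.single 3 1 : Fin 4 → ℝ) - p 3 • (Pi.single 2 1 : Fin 4 → ℝ),
    fun p => p 0 • (Pi.single 1 1 : Fin 4 → ℝ) + p 1 • (Pi.single 0 1 : Fin 4 → ℝ),
    fun p => p 0 • (Pi.single 2 1 : Fin 4 → ℝ) + p 2 • (Pi.single 0 1 : Fin 4 → ℝ),
    fun p => p 0 • (Pi.single 3 1 : Fin 4 → ℝ) + p 3 • (Pi.single 0 1 : Fin 4 → ℝ),
    fun p => p]

noncomputable def GammaList : List (Fin 11) → ((Fin 4 → ℝ) → ℝ) → (Fin 4 → ℝ) → ℝ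
  | [] => fun f p => f p
  | k :: I => fun f p => fderiv ℝ (GammaList I f) p (minkVF k p)

noncomputable def derivNormSq (f : (Fin 4 → ℝ) → ℝ) (p : Fin 4 → ℝ) : ℝ :=
  ∑ μ : Fin 4, (pd μ f p) ^ 2

noncomputable def derivNorm (f : (Fin 4 → ℝ) → ℝ) (p : Fin 4 → ℝ) : ℝ :=
  Real.sqrt (derivNormSq f p)

noncomputable def dS (f : (Fin 4 → ℝ) → ℝ) (p : Fin 4 → ℝ) : ℝ :=
  (1 / 2) * (pd 0 f p + ∑ i : Fin 3, (p i.succ / rad p) * pd i.succ f p)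

noncomputable def dQ (f : (Fin 4 → ℝ) → ℝ) (p : Fin 4 → ℝ) : ℝ :=
  (1 / 2) * ((∑ i : Fin 3, (p i.succ / rad p) * pd i.succ f p) - pd 0 f p)

noncomputable def angSq (f : (Fin 4 → ℝ) → ℝ) (p : Fin 4 → ℝ) : ℝ :=
  (1 / 2) * (∑ i : Fin 3, ∑ j : Fin 3,
    ((p i.succ / rad p) * pd j.succ f p - (p j.succ / rad p) * pd i.succ f p) ^ 2)

noncomputable def goodNormSq (f : (Fin 4 → ℝ) → ℝ) (p : Fin 4 → ℝ) : ℝ :=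
  (dS f p) ^ 2 + angSq f p

noncomputable def goodNorm (f : (Fin 4 → ℝ) → ℝ) (p : Fin 4 → ℝ) : ℝ :=
  Real.sqrt (goodNormSq f p)

noncomputable def gradSq (f : (Fin 4 → ℝ) → ℝ) (p : Fin 4 → ℝ) : ℝ :=
  (pd 0 f p) ^ 2 + ∑ i : Fin 3, (pd i.succ f p) ^ 2

noncomputable def Lup (p : Fin 4 → ℝ) : Fin 4 → ℝ :=
  ![1, p 1 / rad p, p 2 / rad p, p 3 / rad p]

noncomputable def Llow (p : Fin 4 → ℝ) : Fin 4 → ℝ :=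
  ![-1, p 1 / rad p, p 2 / rad p, p 3 / rad p]

noncomputable def Lbup (p : Fin 4 → ℝ) : Fin 4 → ℝ :=
  ![1, -(p 1 / rad p), -(p 2 / rad p), -(p 3 / rad p)]

noncomputable def Evec : Fin 3 → (Fin 4 → ℝ) → Fin 4 → ℝ :=
  ![fun p => (p 2 / rad p) • (Pi.single 3 1 : Fin 4 → ℝ) - (p 3 / rad p) • (Pi.single 2 1 : Fin 4 → ℝ),
    fun p => (p 1 / rad p) • (Pi.single 3 1 : Fin 4 → ℝ) - (p 3 / rad p) • (Pi.single 1 1 : Fin 4 → ℝ),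
    fun p => (p 1 / rad p) • (Pi.single 2 1 : Fin 4 → ℝ) - (p 2 / rad p) • (Pi.single 1 1 : Fin 4 → ℝ)]

noncomputable def frameVF : Fin 5 → (Fin 4 → ℝ) → Fin 4 → ℝ :=
  ![Lup, Lbup, Evec 0, Evec 1, Evec 2]

noncomputable def mInv : Fin 4 → Fin 4 → ℝ :=
  fun α β => if α = β then (if α = 0 then -1 else 1) else 0

noncomputable def wgt (γ q : ℝ) : ℝ :=
  if 0 ≤ q then 1 + (1 + |q|) ^ (1 + 2 * γ) else 1 + (1 + |q|) ^ (-(γ / 2))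

noncomputable def wgt' (γ q : ℝ) : ℝ :=
  if 0 ≤ q then (1 + 2 * γ) * (1 + |q|) ^ (2 * γ) else (γ / 2) * (1 + |q|) ^ (-(γ / 2) - 1)

noncomputable def matNorm (H : (Fin 4 → ℝ) → Fin 4 → Fin 4 → ℝ) (p : Fin 4 → ℝ) : ℝ :=
  Real.sqrt (∑ α : Fin 4, ∑ β : Fin 4, (H p α β) ^ 2)

noncomputable def matLL (H : (Fin 4 → ℝ) → Fin 4 → Fin 4 → ℝ) (p : Fin 4 → ℝ) : ℝ :=
  |∑ α : Fin 4, ∑ β : Fin 4, H p α β * Llow p α * Llow p β|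

noncomputable def dmatNorm (H : (Fin 4 → ℝ) → Fin 4 → Fin 4 → ℝ) (p : Fin 4 → ℝ) : ℝ :=
  Real.sqrt (∑ c : Fin 4, ∑ α : Fin 4, ∑ β : Fin 4, (pd c (fun y => H y α β) p) ^ 2)

noncomputable def dmatLL (H : (Fin 4 → ℝ) → Fin 4 → Fin 4 → ℝ) (p : Fin 4 → ℝ) : ℝ :=
  Real.sqrt (∑ u : Fin 5,
    (∑ α : Fin 4, ∑ β : Fin 4,
      fderiv ℝ (fun y => H y α β) p (frameVF u p) * Llow p α * Llow p β) ^ 2)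

noncomputable def gdmatNorm (H : (Fin 4 → ℝ) → Fin 4 → Fin 4 → ℝ) (p : Fin 4 → ℝ) : ℝ :=
  Real.sqrt (∑ α : Fin 4, ∑ β : Fin 4, goodNormSq (fun y => H y α β) p)

/-- Christoffel symbols of `g` in coordinates. -/
noncomputable def Chr (g ginv : (Fin 4 → ℝ) → Fin 4 → Fin 4 → ℝ) (x : Fin 4 → ℝ)
    (l μ ν : Fin 4) : ℝ :=
  (1 / 2) * (∑ σ : Fin 4, ginv x l σ *
    (pd μ (fun y => g y ν σ) x + pd ν (fun y => g y μ σ) x - pd σ (fun y => g y μ ν) x))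

/-- The coordinate Ricci tensor of `g`. -/
noncomputable def RicCoord (g ginv : (Fin 4 → ℝ) → Fin 4 → Fin 4 → ℝ) (x : Fin 4 → ℝ)
    (μ ν : Fin 4) : ℝ :=
  (∑ a : Fin 4, pd a (fun y => Chr g ginv y a μ ν) x)
    - (∑ a : Fin 4, pd ν (fun y => Chr g ginv y a a μ) x)
    + (∑ a : Fin 4, ∑ b : Fin 4, Chr g ginv x a μ ν * Chr g ginv x b a b)
    - (∑ a : Fin 4, ∑ b : Fin 4, Chr g ginv x a μ b * Chr g ginv x b ν a)

/-- The reduced wave operator `⧠̃_g = (g^{-1})^{αβ} ∂²_{αβ}`. -/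
noncomputable def redBox (ginv : (Fin 4 → ℝ) → Fin 4 → Fin 4 → ℝ)
    (f : (Fin 4 → ℝ) → ℝ) (x : Fin 4 → ℝ) : ℝ :=
  ∑ α : Fin 4, ∑ β : Fin 4, ginv x α β * pd α (fun y => pd β f y) x

/-- The term `P(∂_μ g, ∂_ν g)`. -/
noncomputable def Pterm (g ginv : (Fin 4 → ℝ) → Fin 4 → Fin 4 → ℝ) (x : Fin 4 → ℝ)
    (μ ν : Fin 4) : ℝ :=
  (1 / 4) * (∑ a : Fin 4, ∑ a' : Fin 4, ∑ b : Fin 4, ∑ b' : Fin 4,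
      ginv x a a' * pd μ (fun y => g y a a') x * (ginv x b b' * pd ν (fun y => g y b b') x))
    - (1 / 2) * (∑ a : Fin 4, ∑ a' : Fin 4, ∑ b : Fin 4, ∑ b' : Fin 4,
      ginv x a a' * pd μ (fun y => g y a b) x * (ginv x b b' * pd ν (fun y => g y a' b') x))

/-- The term `Q_{μν}(∂g, ∂g)`. -/
noncomputable def Qterm (g ginv : (Fin 4 → ℝ) → Fin 4 → Fin 4 → ℝ) (x : Fin 4 → ℝ)
    (μ ν : Fin 4) : ℝ :=
  (∑ a : Fin 4, ∑ a' : Fin 4, ∑ b : Fin 4, ∑ b' : Fin 4,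
      pd a (fun y => g y b μ) x * ginv x a a' * ginv x b b' * pd a' (fun y => g y b' ν) x)
    - (∑ a : Fin 4, ∑ a' : Fin 4, ∑ b : Fin 4, ∑ b' : Fin 4,
      ginv x a a' * ginv x b b' *
        (pd a (fun y => g y b μ) x * pd b' (fun y => g y a' ν) x
          - pd b' (fun y => g y b μ) x * pd a (fun y => g y a' ν) x))
    + (∑ a : Fin 4, ∑ a' : Fin 4, ∑ b : Fin 4, ∑ b' : Fin 4,
      ginv x a a' * ginv x b b' *
        (pd μ (fun y => g y a' b') x * pd a (fun y => g y b ν) x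
          - pd a (fun y => g y a' b') x * pd μ (fun y => g y b ν) x))
    + (∑ a : Fin 4, ∑ a' : Fin 4, ∑ b : Fin 4, ∑ b' : Fin 4,
      ginv x a a' * ginv x b b' *
        (pd ν (fun y => g y a' b') x * pd a (fun y => g y b μ) x
          - pd a (fun y => g y a' b') x * pd ν (fun y => g y b μ) x))
    + (1 / 2) * (∑ a : Fin 4, ∑ a' : Fin 4, ∑ b : Fin 4, ∑ b' : Fin 4,
      ginv x a a' * ginv x b b' *
        (pd b' (fun y => g y a a') x * pd μ (fun y => g y b ν) x
          - pd μ (fun y => g y a a') x * pd b' (fun y => g y b ν) x))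
    + (1 / 2) * (∑ a : Fin 4, ∑ a' : Fin 4, ∑ b : Fin 4, ∑ b' : Fin 4,
      ginv x a a' * ginv x b b' *
        (pd b' (fun y => g y a a') x * pd ν (fun y => g y b μ) x
          - pd ν (fun y => g y a a') x * pd b' (fun y => g y b μ) x))

/-- The term `T_{μν}(∂φ, ∂φ) = −4 ∂_μφ ∂_νφ`. -/
noncomputable def Tterm (φ : (Fin 4 → ℝ) → ℝ) (x : Fin 4 → ℝ) (μ ν : Fin 4) : ℝ :=
  -4 * pd μ φ x * pd ν φ x

/-- The gauge term `G_{μν}(g, 𝒢)`. -/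
noncomputable def Gterm (g : (Fin 4 → ℝ) → Fin 4 → Fin 4 → ℝ)
    (Gc : (Fin 4 → ℝ) → Fin 4 → ℝ) (x : Fin 4 → ℝ) (μ ν : Fin 4) : ℝ :=
  - pd μ (fun y => ∑ l : Fin 4, g y ν l * Gc y l) x
    - pd ν (fun y => ∑ l : Fin 4, g y μ l * Gc y l) x
    - (∑ a : Fin 4, Gc x a * pd a (fun y => g y μ ν) x)
    - (∑ a : Fin 4, ∑ b : Fin 4, g x a ν * g x b μ * Gc x a * Gc x b)

/-! For any metric, with `W_μ = g^{αβ} ∂_α g_{βμ} - ½ g^{αβ} ∂_μ g_{αβ}`, the coordinate Ricci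
tensor satisfies
`g^{αβ} ∂²_{αβ} g_{μν} + 2 Ric_{μν} = P + Q + ∂_μ W_ν + ∂_ν W_μ + W^α ∂_α g_{μν} - W_μ W_ν`.
Indeed, second derivatives of `g` enter `Ric` only through the wave operator and the symmetrized
gradient of `W`, and the quadratic terms on both sides are combinations of the same few
contractions of `∂g ⊗ ∂g`. The wave coordinate condition says `W_μ = -g_{μν} 𝒢^ν`, which turns the
terms in `W` into `G`, and the field equations turn `-2 Ric` into `T`. -/

open Finset Filter Topology

section Contraction

variable {ι R : Type*} [Fintype ι] [CommRing R]

/-- The contraction `h^{ab} f_{ab}` of a covariant 2-tensor with a contravariant one. -/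
def contract (h f : ι → ι → R) : R :=
  ∑ a, ∑ b, h a b * f a b

/-- The double contraction `h^{aa'} h^{bb'} f_{aa'bb'}`; the arguments of `f` come in the pairs that
are contracted with each other. -/
def contract₂ (h : ι → ι → R) (f : ι → ι → ι → ι → R) : R :=
  contract h fun a a' => contract h (f a a')

/-- The inner product `h^{aa'} h^{bb'} f_{ab} k_{a'b'}` that `h` induces on covariant 2-tensors. -/
def tensorInner (h f k : ι → ι → R) : R :=
  contract₂ h fun a a' b b' => f a b * k a' b'

lemma contract_add (h f k : ι → ι → R) :
    contract h (fun a b => f a b + k a b) = contract h f + contract h k := by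
  simp only [contract, mul_add, sum_add_distrib]

lemma contract_sub (h f k : ι → ι → R) :
    contract h (fun a b => f a b - k a b) = contract h f - contract h k := by
  simp only [contract, mul_sub, sum_sub_distrib]

lemma contract_neg (h f : ι → ι → R) : contract h (fun a b => -f a b) = -contract h f := by
  simp only [contract, mul_neg, sum_neg_distrib]

lemma contract_const_mul (h : ι → ι → R) (c : R) (f : ι → ι → R) :
    contract h (fun a b => c * f a b) = c * contract h f := by
  simp only [contract, mul_sum, mul_left_comm c]

lemma contract_mul_const (h f : ι → ι → R) (c : R) :
    contract h (fun a b => f a b * c) = contract h f * c := by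
  simp only [contract, sum_mul, mul_assoc]

lemma contract_swap {h : ι → ι → R} (hs : ∀ a b, h a b = h b a) (f : ι → ι → R) :
    contract h (fun a b => f b a) = contract h f := by
  simp only [contract]
  rw [sum_comm]
  simp only [hs]

lemma contract₂_eq_sum (h : ι → ι → R) (f : ι → ι → ι → ι → R) :
    contract₂ h f = ∑ a, ∑ a', ∑ b, ∑ b', h a a' * h b b' * f a a' b b' := by
  simp only [contract₂, contract, mul_sum, mul_assoc]

lemma contract₂_sub (h : ι → ι → R) (f k : ι → ι → ι → ι → R) :
    contract₂ h (fun a a' b b' => f a a' b b' - k a a' b b') = contract₂ h f - contract₂ h k := by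
  simp only [contract₂, contract_sub]

lemma contract₂_comm (h : ι → ι → R) (f : ι → ι → ι → ι → R) :
    contract₂ h (fun a a' b b' => f b b' a a') = contract₂ h f := by
  simp only [contract₂_eq_sum, ← sum_product' (univ : Finset ι) (univ : Finset ι)]
  rw [sum_comm]
  simp only [mul_comm (h _ _) (h _ _)]

lemma contract₂_mul (h f k : ι → ι → R) :
    contract₂ h (fun a a' b b' => f a a' * k b b') = contract h f * contract h k := by
  simp only [contract₂, contract_const_mul, contract_mul_const]

lemma contract₂_mul_vector {h : ι → ι → R} (hs : ∀ a b, h a b = h b a) (f : ι → ι → ι → R)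
    (v : ι → R) :
    contract₂ h (fun a a' b b' => f b' a a' * v b)
      = contract h fun a b => contract h (f a) * v b := by
  rw [← contract₂_comm, ← contract_swap hs fun a b => contract h (f a) * v b]
  simp only [contract₂, contract_mul_const]

lemma sum_raise_mul_raise (h : ι → ι → R) (f k : ι → ι → ι → R) :
    ∑ a, ∑ b, (∑ a', h a a' * f a b a') * (∑ b', h b b' * k a b b')
      = contract₂ h (fun a a' b b' => f a b a' * k a b b') := by
  rw [contract₂_eq_sum]
  refine sum_congr rfl fun a _ => ?_
  rw [sum_comm]
  simp only [sum_mul_sum, mul_mul_mul_comm]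

lemma tensorInner_add_left (h f f' k : ι → ι → R) :
    tensorInner h (fun a b => f a b + f' a b) k = tensorInner h f k + tensorInner h f' k := by
  simp only [tensorInner, contract₂, add_mul, contract_add]

lemma tensorInner_sub_left (h f f' k : ι → ι → R) :
    tensorInner h (fun a b => f a b - f' a b) k = tensorInner h f k - tensorInner h f' k := by
  simp only [tensorInner, contract₂, sub_mul, contract_sub]

lemma tensorInner_add_right (h f k k' : ι → ι → R) :
    tensorInner h f (fun a b => k a b + k' a b) = tensorInner h f k + tensorInner h f k' := by
  simp only [tensorInner, contract₂, mul_add, contract_add]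

lemma tensorInner_sub_right (h f k k' : ι → ι → R) :
    tensorInner h f (fun a b => k a b - k' a b) = tensorInner h f k - tensorInner h f k' := by
  simp only [tensorInner, contract₂, mul_sub, contract_sub]

lemma tensorInner_const_mul_left (h : ι → ι → R) (c : R) (f k : ι → ι → R) :
    tensorInner h (fun a b => c * f a b) k = c * tensorInner h f k := by
  simp only [tensorInner, contract₂, mul_assoc, contract_const_mul]

lemma tensorInner_transpose (h f k : ι → ι → R) :
    tensorInner h (fun a b => f b a) (fun a b => k b a) = tensorInner h f k :=
  contract₂_comm h fun a a' b b' => f a b * k a' b'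

lemma tensorInner_comm {h : ι → ι → R} (hs : ∀ a b, h a b = h b a) (f k : ι → ι → R) :
    tensorInner h f k = tensorInner h k f := by
  simp only [tensorInner, contract₂]
  rw [← contract_swap hs]
  refine congrArg (contract h) (funext₂ fun a a' => ?_)
  rw [← contract_swap hs]
  simp only [mul_comm]

lemma tensorInner_transpose_right {h : ι → ι → R} (hs : ∀ a b, h a b = h b a) (f k : ι → ι → R) :
    tensorInner h f (fun a b => k b a) = contract₂ h fun a a' b b' => f b a' * k a b' := by
  rw [tensorInner, ← contract₂_comm]
  exact contract_swap hs fun a a' => contract h fun b b' => f b a' * k a b'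

lemma tensorInner_transpose_left_of_symm {k : ι → ι → R} (hk : ∀ a b, k a b = k b a)
    (h f : ι → ι → R) : tensorInner h (fun a b => f b a) k = tensorInner h f k := by
  rw [← tensorInner_transpose h f k]
  simp only [hk]

lemma tensorInner_symm_antisymm {s t : ι → ι → R} (hs : ∀ a b, s a b = s b a)
    (ht : ∀ a b, t a b = t b a) (h u v : ι → ι → R) :
    tensorInner h (fun a b => s a b + (u a b - u b a)) (fun a b => t a b + (v b a - v a b))
      = tensorInner h s t + 2 * tensorInner h u (fun a b => v b a) - 2 * tensorInner h u v := by
  have hut := tensorInner_transpose_left_of_symm ht h u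
  have hsv : tensorInner h s (fun a b => v b a) = tensorInner h s v := by
    rw [← tensorInner_transpose h s v]
    simp only [hs]
  have huv := tensorInner_transpose h u v
  have huv' := tensorInner_transpose h u fun a b => v b a
  simp only [tensorInner_add_left, tensorInner_sub_left, tensorInner_add_right,
    tensorInner_sub_right]
  linear_combination hsv - hut + huv' - huv

lemma symm_of_mul_eq_one [DecidableEq ι] {h g : ι → ι → R} (hg : ∀ a b, g a b = g b a)
    (hinv : Matrix.of h * Matrix.of g = 1) (a b : ι) : h a b = h b a := by
  have hgT : (Matrix.of g).IsSymm := .ext fun i j => hg j i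
  have hhT := hgT.inv
  rw [Matrix.inv_eq_left_inv hinv] at hhT
  exact hhT.apply b a

lemma contract_lower_mul [DecidableEq ι] {h g : ι → ι → R} (hg : ∀ a b, g a b = g b a)
    (hinv : Matrix.of h * Matrix.of g = 1) (u v : ι → R) :
    contract h (fun a b => (∑ c, g a c * u c) * v b) = ∑ b, u b * v b := by
  have hraise : (Matrix.of h).mulVec ((Matrix.of g).mulVec u) = u := by
    rw [Matrix.mulVec_mulVec, hinv, Matrix.one_mulVec]
  rw [← contract_swap (symm_of_mul_eq_one hg hinv)]
  simp only [contract, ← mul_assoc, ← sum_mul]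
  exact sum_congr rfl fun b _ => congrArg (· * v b) (congrFun hraise b)

end Contraction

section Christoffel

variable {ι R : Type*} [CommRing R]

/-- Twice the Christoffel symbol of the first kind, `∂_m g_{ns} + ∂_n g_{ms} - ∂_s g_{mn}`, where
`d a b c` stands for `∂_a g_{bc}`. -/
def christoffelFirst (d : ι → ι → ι → R) (m n s : ι) : R :=
  d m n s + d n m s - d s m n

variable [Fintype ι]

/-- The divergence `h^{ab} ∂_a g_{bc}`, where `d a b c` stands for `∂_a g_{bc}`. -/
def divCovector (h : ι → ι → R) (d : ι → ι → ι → R) (c : ι) : R :=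
  contract h fun a b => d a b c

/-- The trace `h^{ab} ∂_c g_{ab}`, where `d a b c` stands for `∂_a g_{bc}`. -/
def traceCovector (h : ι → ι → R) (d : ι → ι → ι → R) (c : ι) : R :=
  contract h (d c)

variable {h : ι → ι → R} {d : ι → ι → ι → R}

lemma contract_mul_christoffelFirst (hd : ∀ a b c, d a b c = d a c b) (u : ι → R) (m n : ι) :
    contract h (fun a b => u a * christoffelFirst d m n b)
      = contract h (fun a b => u a * d m b n) + contract h (fun a b => u a * d n b m)
        - contract h (fun a b => u a * d b m n) := by
  simp only [christoffelFirst, mul_sub, mul_add, contract_sub, contract_add, hd m n, hd n m]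

lemma contract_christoffelFirst (hs : ∀ a b, h a b = h b a) (a : ι) :
    contract h (christoffelFirst d a) = traceCovector h d a := by
  have hswap : contract h (fun b c => d c a b) = contract h (fun b c => d b a c) :=
    contract_swap hs fun b c => d b a c
  calc contract h (christoffelFirst d a)
      = contract h (d a) + contract h (fun b c => d b a c) - contract h (fun b c => d c a b) := by
        rw [← contract_add, ← contract_sub]; rfl
    _ = traceCovector h d a := by rw [hswap, add_sub_cancel_right]; rfl

lemma contract₂_mul_christoffelFirst_trace (hs : ∀ a b, h a b = h b a) (m n : ι) :
    contract₂ h (fun a a' b b' => christoffelFirst d m n a' * christoffelFirst d a b b')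
      = contract h (fun a b => traceCovector h d a * christoffelFirst d m n b) := by
  simp only [contract₂, contract_const_mul, contract_christoffelFirst hs, mul_comm]

lemma tensorInner_christoffelFirst_left (hd : ∀ a b c, d a b c = d a c b) (m n : ι) :
    tensorInner h (fun a b => christoffelFirst d a m b) (d n) = tensorInner h (d m) (d n) := by
  have hsplit : (fun a b => christoffelFirst d a m b)
      = fun a b => d m a b + d a b m - d b a m := by
    funext a b
    rw [christoffelFirst, hd a m b, add_comm (d a b m)]
  rw [hsplit, tensorInner_sub_left, tensorInner_add_left,
    tensorInner_transpose_left_of_symm (hd n) h fun a b => d a b m, add_sub_cancel_right]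

-- `christoffelFirst d m` is the symmetric tensor `d m` plus the antisymmetrization of `∂_a g_{bm}`,
-- so the mixed products vanish.
lemma tensorInner_christoffelFirst_transpose (hd : ∀ a b c, d a b c = d a c b) (m n : ι) :
    tensorInner h (christoffelFirst d m) (fun a b => christoffelFirst d n b a)
      = tensorInner h (d m) (d n)
        + 2 * tensorInner h (fun a b => d a b m) (fun a b => d b a n)
        - 2 * tensorInner h (fun a b => d a b m) (fun a b => d a b n) := by
  have hleft : christoffelFirst d m = fun a b => d m a b + (d a b m - d b a m) := by
    funext a b
    rw [christoffelFirst, hd a m b, hd b m a, add_sub_assoc]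
  have hright : (fun a b => christoffelFirst d n b a)
      = fun a b => d n a b + (d b a n - d a b n) := by
    funext a b
    rw [christoffelFirst, hd n b a, hd b n a, hd a n b, add_sub_assoc]
  rw [hleft, hright, tensorInner_symm_antisymm (hd m) (hd n)]

lemma divCovector_mul_divCovector (hs : ∀ a b, h a b = h b a) (m n : ι) :
    divCovector h d m * divCovector h d n
      = contract₂ h fun a a' b b' => d b' b m * d a a' n := by
  have hswap := contract_swap hs fun a b => d a b m
  rw [divCovector, divCovector, ← hswap, ← contract₂_mul, ← contract₂_comm]

lemma traceCovector_mul_divCovector (hs : ∀ a b, h a b = h b a) (m n : ι) :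
    traceCovector h d m * divCovector h d n
      = contract₂ h fun a a' b b' => d m a a' * d b' b n := by
  have hswap := contract_swap hs fun a b => d a b n
  rw [traceCovector, divCovector, ← hswap, ← contract₂_mul]

lemma contract_divCovector_mul (hs : ∀ a b, h a b = h b a) (v : ι → R) :
    contract h (fun a b => divCovector h d a * v b)
      = contract₂ h fun a a' b b' => d a a' b' * v b :=
  (contract₂_mul_vector hs (fun c a b => d a b c) v).symm

lemma contract_traceCovector_mul (hs : ∀ a b, h a b = h b a) (v : ι → R) :
    contract h (fun a b => traceCovector h d a * v b)
      = contract₂ h fun a a' b b' => d b' a a' * v b :=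
  (contract₂_mul_vector hs d v).symm

end Christoffel

section Gauge

variable {ι K : Type*} [Field K]

/-- The tensor `∂_a g_{bc} - ½ ∂_c g_{ab}`, whose contraction over `a` and `b` is the covector in
the wave coordinate condition; `d a b c` stands for `∂_a g_{bc}`. -/
def gaugeSymbol (d : ι → ι → ι → K) (c a b : ι) : K :=
  d a b c - 1 / 2 * d c a b

variable [Fintype ι]

/-- The gauge covector `h^{ab} (∂_a g_{bc} - ½ ∂_c g_{ab})`, that is `g_{cl} h^{ab} Γ^l_{ab}` when
`h` is the inverse of `g`; it vanishes exactly in wave coordinates. -/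
def gaugeCovector (h : ι → ι → K) (d : ι → ι → ι → K) (c : ι) : K :=
  contract h (gaugeSymbol d c)

variable {h : ι → ι → K} {d : ι → ι → ι → K}

lemma gaugeCovector_eq_divCovector_sub (c : ι) :
    gaugeCovector h d c = divCovector h d c - 1 / 2 * traceCovector h d c := by
  rw [divCovector, traceCovector, ← contract_const_mul, ← contract_sub]
  rfl

lemma contract_gaugeCovector_mul (k : ι → ι → K) :
    contract h (fun a b => gaugeCovector h d a * k a b)
      = contract h (fun a b => divCovector h d a * k a b)
        - 1 / 2 * contract h (fun a b => traceCovector h d a * k a b) := by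
  rw [← contract_const_mul, ← contract_sub]
  simp only [gaugeCovector_eq_divCovector_sub, sub_mul, mul_assoc]

lemma tensorInner_gaugeSymbol_left (n : ι) (k : ι → ι → K) :
    tensorInner h (gaugeSymbol d n) k
      = tensorInner h (fun a b => d a b n) k - 1 / 2 * tensorInner h (d n) k := by
  rw [← tensorInner_const_mul_left, ← tensorInner_sub_left]
  rfl

-- The second-order part of the Ricci tensor fails to be a wave operator exactly by the symmetrized
-- gradient of the gauge covector.
lemma contract_hessian_eq [NeZero (2 : K)] (hs : ∀ a b, h a b = h b a)
    {D : ι → ι → ι → ι → K} (hD : ∀ a b c e, D a b c e = D b a c e)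
    (hD' : ∀ a b c e, D a b c e = D a b e c) (m n : ι) :
    contract h (fun a b => D a b m n)
      = contract h (fun a b => christoffelFirst (D n) a m b)
        - contract h (fun a b => christoffelFirst (D a) m n b)
        + contract h (gaugeSymbol (D m) n) + contract h (gaugeSymbol (D n) m) := by
  have hantisymm : contract h (fun a b => D n b a m) = contract h (fun a b => D n a b m) :=
    contract_swap hs fun a b => D n a b m
  have hpointwise : ∀ a b, D a b m n + D n a b m = christoffelFirst (D n) a m b
      - christoffelFirst (D a) m n b + gaugeSymbol (D m) n a b + gaugeSymbol (D n) m a b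
      + D n b a m := by
    intro a b
    simp only [christoffelFirst, gaugeSymbol]
    linear_combination hD a m n b + hD' m a n b + hD a n m b - 1 / 2 * hD n m a b
      + D n m a b * add_halves (1 : K)
  have hcontract := congrArg (contract h) (funext₂ hpointwise)
  simp only [contract_add, contract_sub] at hcontract
  linear_combination hcontract + hantisymm

end Gauge

section MatrixInverse

variable {𝕜 E n : Type*} [NontriviallyNormedField 𝕜] [NormedAddCommGroup E] [NormedSpace 𝕜 E]
  [Fintype n] [DecidableEq n] {A : E → Matrix n n 𝕜} {x : E}

lemma differentiableAt_matrix_det (hA : ∀ i j, DifferentiableAt 𝕜 (fun y => A y i j) x) :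
    DifferentiableAt 𝕜 (fun y => (A y).det) x := by
  simp only [Matrix.det_apply']
  refine .fun_sum fun σ _ => .const_mul ?_ _
  exact (HasFDerivAt.finsetProd fun i _ => (hA (σ i) i).hasFDerivAt).differentiableAt

lemma differentiableAt_matrix_inv_apply (hA : ∀ i j, DifferentiableAt 𝕜 (fun y => A y i j) x)
    (hdet : (A x).det ≠ 0) (i j : n) : DifferentiableAt 𝕜 (fun y => (A y)⁻¹ i j) x := by
  have hcofactor : DifferentiableAt 𝕜 (fun y => ((A y).updateRow j (Pi.single i 1)).det) x := by
    refine differentiableAt_matrix_det fun k l => ?_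
    obtain rfl | hk := eq_or_ne k j
    · simp only [Matrix.updateRow_self, differentiableAt_const]
    · simpa only [Matrix.updateRow_ne hk] using hA k l
  simp only [Matrix.inv_def, Ring.inverse_eq_inv', Matrix.smul_apply, smul_eq_mul,
    Matrix.adjugate_apply]
  exact ((differentiableAt_matrix_det hA).fun_inv hdet).fun_mul hcofactor

end MatrixInverse

section PartialDerivative

variable {μ : Fin 4} {f f' : (Fin 4 → ℝ) → ℝ} {x : Fin 4 → ℝ}

lemma pd_congr (h : f =ᶠ[𝓝 x] f') : pd μ f x = pd μ f' x := by
  rw [pd, pd, h.fderiv_eq]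

lemma pd_const (μ : Fin 4) (c : ℝ) (x : Fin 4 → ℝ) : pd μ (fun _ => c) x = 0 := by
  simp [pd]

lemma pd_neg (μ : Fin 4) (f : (Fin 4 → ℝ) → ℝ) (x : Fin 4 → ℝ) :
    pd μ (fun y => -f y) x = -pd μ f x := by
  rw [pd, fderiv_fun_neg]
  rfl

lemma pd_add (hf : DifferentiableAt ℝ f x) (hf' : DifferentiableAt ℝ f' x) :
    pd μ (fun y => f y + f' y) x = pd μ f x + pd μ f' x := by
  rw [pd, fderiv_fun_add hf hf']
  rfl

lemma pd_sub (hf : DifferentiableAt ℝ f x) (hf' : DifferentiableAt ℝ f' x) :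
    pd μ (fun y => f y - f' y) x = pd μ f x - pd μ f' x := by
  rw [pd, fderiv_fun_sub hf hf']
  rfl

lemma pd_mul (hf : DifferentiableAt ℝ f x) (hf' : DifferentiableAt ℝ f' x) :
    pd μ (fun y => f y * f' y) x = pd μ f x * f' x + f x * pd μ f' x := by
  simp only [pd, fderiv_fun_mul hf hf', add_apply, smul_apply, smul_eq_mul]
  ring

lemma pd_const_mul (hf : DifferentiableAt ℝ f x) (c : ℝ) :
    pd μ (fun y => c * f y) x = c * pd μ f x := by
  rw [pd, fderiv_const_mul hf]
  rfl

lemma pd_sum {ι : Type*} {s : Finset ι} {F : ι → (Fin 4 → ℝ) → ℝ}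
    (hF : ∀ i ∈ s, DifferentiableAt ℝ (F i) x) :
    pd μ (fun y => ∑ i ∈ s, F i y) x = ∑ i ∈ s, pd μ (F i) x := by
  simp only [pd, fderiv_fun_sum hF, _root_.sum_apply]

lemma differentiableAt_pd (hf : ContDiffAt ℝ 2 f x) (μ : Fin 4) :
    DifferentiableAt ℝ (fun y => pd μ f y) x :=
  have hf' : ContDiffAt ℝ 1 (fderiv ℝ f) x := hf.fderiv_right (by norm_num)
  (hf'.differentiableAt one_ne_zero).clm_apply (differentiableAt_const _)

lemma pd_pd_eq_fderiv_fderiv (hf : ContDiffAt ℝ 2 f x) (μ ν : Fin 4) :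
    pd μ (fun y => pd ν f y) x
      = fderiv ℝ (fderiv ℝ f) x (Pi.single μ 1) (Pi.single ν 1) := by
  have hf' : ContDiffAt ℝ 1 (fderiv ℝ f) x := hf.fderiv_right (by norm_num)
  simp [pd, fderiv_clm_apply (hf'.differentiableAt one_ne_zero) (differentiableAt_const _)]

lemma pd_comm (hf : ContDiffAt ℝ 2 f x) (μ ν : Fin 4) :
    pd μ (fun y => pd ν f y) x = pd ν (fun y => pd μ f y) x := by
  rw [pd_pd_eq_fderiv_fderiv hf, pd_pd_eq_fderiv_fderiv hf]
  exact hf.isSymmSndFDerivAt (by simp) _ _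

end PartialDerivative

/-- The first derivatives `∂_a g_{bc}` of the metric components. -/
noncomputable def metricDeriv (g : (Fin 4 → ℝ) → Fin 4 → Fin 4 → ℝ) (x : Fin 4 → ℝ)
    (a b c : Fin 4) : ℝ :=
  pd a (fun y => g y b c) x

/-- The second derivatives `∂_a ∂_b g_{ce}` of the metric components. -/
noncomputable def metricHessian (g : (Fin 4 → ℝ) → Fin 4 → Fin 4 → ℝ) (x : Fin 4 → ℝ)
    (a b c e : Fin 4) : ℝ :=
  pd a (fun y => metricDeriv g y b c e) x

section Metric

variable {g ginv : (Fin 4 → ℝ) → Fin 4 → Fin 4 → ℝ} {x : Fin 4 → ℝ}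

lemma metricDeriv_symm (hsymm : ∀ᶠ y in 𝓝 x, ∀ a b, g y a b = g y b a) (a b c : Fin 4) :
    metricDeriv g x a b c = metricDeriv g x a c b :=
  pd_congr (hsymm.mono fun _ hy => hy b c)

lemma metricHessian_symm (hsymm : ∀ᶠ y in 𝓝 x, ∀ a b, g y a b = g y b a) (a b c e : Fin 4) :
    metricHessian g x a b c e = metricHessian g x a b e c :=
  pd_congr (hsymm.eventually_nhds.mono fun _ hy => metricDeriv_symm hy b c e)

lemma metricHessian_comm (hg : ∀ a b, ContDiffAt ℝ 2 (fun y => g y a b) x) (a b c e : Fin 4) :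
    metricHessian g x a b c e = metricHessian g x b a c e :=
  pd_comm (hg c e) a b

lemma differentiableAt_metricDeriv (hg : ∀ a b, ContDiffAt ℝ 2 (fun y => g y a b) x)
    (a b c : Fin 4) : DifferentiableAt ℝ (fun y => metricDeriv g y a b c) x :=
  differentiableAt_pd (hg b c) a

lemma pd_christoffelFirst (hg : ∀ a b, ContDiffAt ℝ 2 (fun y => g y a b) x) (c m n s : Fin 4) :
    pd c (fun y => christoffelFirst (metricDeriv g y) m n s) x
      = christoffelFirst (metricHessian g x c) m n s := by
  have hd := differentiableAt_metricDeriv hg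
  simp only [christoffelFirst]
  rw [pd_sub ((hd m n s).fun_add (hd n m s)) (hd s m n), pd_add (hd m n s) (hd n m s)]
  rfl

lemma differentiableAt_christoffelFirst (hg : ∀ a b, ContDiffAt ℝ 2 (fun y => g y a b) x)
    (m n s : Fin 4) :
    DifferentiableAt ℝ (fun y => christoffelFirst (metricDeriv g y) m n s) x :=
  have hd := differentiableAt_metricDeriv hg
  ((hd m n s).fun_add (hd n m s)).fun_sub (hd s m n)

lemma pd_gaugeSymbol (hg : ∀ a b, ContDiffAt ℝ 2 (fun y => g y a b) x) (c n a b : Fin 4) :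
    pd c (fun y => gaugeSymbol (metricDeriv g y) n a b) x
      = gaugeSymbol (metricHessian g x c) n a b := by
  have hd := differentiableAt_metricDeriv hg
  simp only [gaugeSymbol]
  rw [pd_sub (hd a b n) ((hd n a b).const_mul _), pd_const_mul (hd n a b)]
  rfl

lemma differentiableAt_gaugeSymbol (hg : ∀ a b, ContDiffAt ℝ 2 (fun y => g y a b) x)
    (n a b : Fin 4) : DifferentiableAt ℝ (fun y => gaugeSymbol (metricDeriv g y) n a b) x :=
  have hd := differentiableAt_metricDeriv hg
  (hd a b n).fun_sub ((hd n a b).const_mul _)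

lemma differentiableAt_ginv (hg : ∀ a b, DifferentiableAt ℝ (fun y => g y a b) x)
    (hinv : ∀ᶠ y in 𝓝 x, Matrix.of (ginv y) * Matrix.of (g y) = 1) (a b : Fin 4) :
    DifferentiableAt ℝ (fun y => ginv y a b) x := by
  have hdet := Matrix.det_ne_zero_of_left_inverse hinv.self_of_nhds
  refine DifferentiableAt.congr_of_eventuallyEq
    (differentiableAt_matrix_inv_apply (A := fun y => .of (g y)) hg hdet a b) ?_
  filter_upwards [hinv] with y hy
  rw [Matrix.inv_eq_left_inv hy, Matrix.of_apply]

-- Differentiate `g⁻¹ g = 1`: the derivative of `g⁻¹` is `-g⁻¹ (∂g) g⁻¹`.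
lemma pd_ginv (hg : ∀ a b, DifferentiableAt ℝ (fun y => g y a b) x)
    (hinv : ∀ᶠ y in 𝓝 x, Matrix.of (ginv y) * Matrix.of (g y) = 1) (c a b : Fin 4) :
    pd c (fun y => ginv y a b) x
      = -∑ a', ∑ b', ginv x a a' * (metricDeriv g x c a' b' * ginv x b' b) := by
  have hginv := differentiableAt_ginv hg hinv
  have hx := hinv.self_of_nhds
  let H := Matrix.of (ginv x)
  let dG := Matrix.of (metricDeriv g x c)
  let dH := Matrix.of fun i j => pd c (fun y => ginv y i j) x
  have hleibniz : dH * Matrix.of (g x) + H * dG = 0 := by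
    ext i j
    have hconst : pd c (fun y => ∑ k, ginv y i k * g y k j) x = 0 :=
      (pd_congr (hinv.mono fun _ hy => congrFun₂ hy i j)).trans (pd_const c _ x)
    rw [pd_sum fun k _ => (hginv i k).fun_mul (hg k j)] at hconst
    simp only [pd_mul (hginv i _) (hg _ j), sum_add_distrib] at hconst
    exact hconst
  have hdH : dH = -(H * (dG * H)) := by
    have hmul := congrArg (· * H) hleibniz
    simp only [add_mul, zero_mul, Matrix.mul_assoc, mul_eq_one_comm.mp hx, mul_one, H] at hmul
    exact eq_neg_of_add_eq_zero_left hmul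
  calc pd c (fun y => ginv y a b) x = (-(H * (dG * H))) a b := congrFun₂ hdH a b
    _ = _ := by simp only [Matrix.neg_apply, Matrix.mul_apply, mul_sum]; rfl

-- The direction `c a` may depend on the summation index, to cover both divergences (`c = id`) and
-- derivatives in a fixed direction.
lemma sum_pd_ginv_mul (hsymm : ∀ a b, g x a b = g x b a)
    (hinv : ∀ᶠ y in 𝓝 x, Matrix.of (ginv y) * Matrix.of (g y) = 1)
    (hg : ∀ a b, DifferentiableAt ℝ (fun y => g y a b) x) (c : Fin 4 → Fin 4)
    {F : (Fin 4 → ℝ) → Fin 4 → Fin 4 → ℝ} (hF : ∀ a b, DifferentiableAt ℝ (fun y => F y a b) x) :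
    ∑ a, ∑ b, pd (c a) (fun y => ginv y a b * F y a b) x
      = contract (ginv x) (fun a b => pd (c a) (fun y => F y a b) x)
        - contract₂ (ginv x) fun a a' b b' => F x a b * metricDeriv g x (c a) a' b' := by
  have hs := symm_of_mul_eq_one hsymm hinv.self_of_nhds
  have hinvderiv : ∑ a, ∑ b, pd (c a) (fun y => ginv y a b) x * F x a b
      = -contract₂ (ginv x) fun a a' b b' => F x a b * metricDeriv g x (c a) a' b' := by
    simp only [pd_ginv hg hinv, contract₂_eq_sum, neg_mul, sum_neg_distrib, neg_inj, sum_mul]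
    refine sum_congr rfl fun a _ => ?_
    rw [sum_comm]
    refine sum_congr rfl fun a' _ => sum_congr rfl fun b _ => sum_congr rfl fun b' _ => ?_
    rw [hs b' b]
    ring
  simp only [pd_mul (differentiableAt_ginv hg hinv _ _) (hF _ _), sum_add_distrib, hinvderiv]
  rw [contract]
  ring

lemma pd_gaugeCovector (hsymm : ∀ a b, g x a b = g x b a)
    (hinv : ∀ᶠ y in 𝓝 x, Matrix.of (ginv y) * Matrix.of (g y) = 1)
    (hg : ∀ a b, ContDiffAt ℝ 2 (fun y => g y a b) x) (c n : Fin 4) :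
    pd c (fun y => gaugeCovector (ginv y) (metricDeriv g y) n) x
      = contract (ginv x) (gaugeSymbol (metricHessian g x c) n)
        - tensorInner (ginv x) (gaugeSymbol (metricDeriv g x) n) (metricDeriv g x c) := by
  have hg' a b := (hg a b).differentiableAt two_ne_zero
  have hsymbol := differentiableAt_gaugeSymbol hg n
  have hterm a b := (differentiableAt_ginv hg' hinv a b).fun_mul (hsymbol a b)
  simp only [gaugeCovector, contract]
  rw [pd_sum fun a _ => .fun_sum fun b _ => hterm a b]
  simp only [pd_sum fun b _ => hterm _ b]
  rw [sum_pd_ginv_mul hsymm hinv hg' (fun _ => c) hsymbol]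
  simp only [pd_gaugeSymbol hg]
  rfl

lemma sum_pd_Chr (hsymm : ∀ a b, g x a b = g x b a)
    (hinv : ∀ᶠ y in 𝓝 x, Matrix.of (ginv y) * Matrix.of (g y) = 1)
    (hg : ∀ a b, ContDiffAt ℝ 2 (fun y => g y a b) x) (c p q : Fin 4 → Fin 4) :
    ∑ a, pd (c a) (fun y => Chr g ginv y a (p a) (q a)) x
      = 1 / 2 * (contract (ginv x)
            (fun a b => christoffelFirst (metricHessian g x (c a)) (p a) (q a) b)
          - contract₂ (ginv x) fun a a' b b' =>
            christoffelFirst (metricDeriv g x) (p a) (q a) b * metricDeriv g x (c a) a' b') := by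
  have hg' a b := (hg a b).differentiableAt two_ne_zero
  have hsymbol a := differentiableAt_christoffelFirst hg (p a) (q a)
  have hterm a b := (differentiableAt_ginv hg' hinv a b).fun_mul (hsymbol a b)
  have hChr a : pd (c a) (fun y => Chr g ginv y a (p a) (q a)) x
      = 1 / 2 * ∑ b, pd (c a)
        (fun y => ginv y a b * christoffelFirst (metricDeriv g y) (p a) (q a) b) x := by
    rw [← pd_sum fun b _ => hterm a b, ← pd_const_mul (.fun_sum fun b _ => hterm a b)]
    rfl
  simp only [hChr]
  rw [← mul_sum, sum_pd_ginv_mul hsymm hinv hg' c hsymbol]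
  simp only [pd_christoffelFirst hg]

lemma sum_Chr_mul_Chr_trace (hs : ∀ a b, ginv x a b = ginv x b a) (m n : Fin 4) :
    ∑ a, ∑ b, Chr g ginv x a m n * Chr g ginv x b a b
      = 1 / 4 * contract (ginv x) fun a b => traceCovector (ginv x) (metricDeriv g x) a
          * christoffelFirst (metricDeriv g x) m n b := by
  rw [← contract₂_mul_christoffelFirst_trace hs,
    ← sum_raise_mul_raise (ginv x) (fun _ _ => christoffelFirst (metricDeriv g x) m n)]
  simp only [mul_sum (univ : Finset (Fin 4)) _ (1 / 4 : ℝ)]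
  refine sum_congr rfl fun a _ => sum_congr rfl fun b _ => ?_
  simp only [Chr, christoffelFirst, metricDeriv]
  ring

lemma sum_Chr_mul_Chr_swap (hs : ∀ a b, ginv x a b = ginv x b a) (m n : Fin 4) :
    ∑ a, ∑ b, Chr g ginv x a m b * Chr g ginv x b n a
      = 1 / 4 * tensorInner (ginv x) (christoffelFirst (metricDeriv g x) m)
          fun a b => christoffelFirst (metricDeriv g x) n b a := by
  rw [tensorInner_transpose_right hs,
    ← sum_raise_mul_raise (ginv x) (fun _ => christoffelFirst (metricDeriv g x) m)
      fun a _ => christoffelFirst (metricDeriv g x) n a]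
  simp only [mul_sum (univ : Finset (Fin 4)) _ (1 / 4 : ℝ)]
  refine sum_congr rfl fun a _ => sum_congr rfl fun b _ => ?_
  simp only [Chr, christoffelFirst, metricDeriv]
  ring

lemma two_mul_RicCoord (hsymm : ∀ᶠ y in 𝓝 x, ∀ a b, g y a b = g y b a)
    (hinv : ∀ᶠ y in 𝓝 x, Matrix.of (ginv y) * Matrix.of (g y) = 1)
    (hg : ∀ a b, ContDiffAt ℝ 2 (fun y => g y a b) x) (m n : Fin 4) :
    2 * RicCoord g ginv x m n
      = contract (ginv x) (fun a b => christoffelFirst (metricHessian g x a) m n b)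
        - contract (ginv x) (fun a b => christoffelFirst (metricHessian g x n) a m b)
        - contract (ginv x) (fun a b => gaugeCovector (ginv x) (metricDeriv g x) a
            * christoffelFirst (metricDeriv g x) m n b)
        + 1 / 2 * tensorInner (ginv x) (metricDeriv g x m) (metricDeriv g x n)
        - tensorInner (ginv x) (fun a b => metricDeriv g x a b m) (fun a b => metricDeriv g x b a n)
        + tensorInner (ginv x) (fun a b => metricDeriv g x a b m)
            (fun a b => metricDeriv g x a b n) := by
  have hx := hsymm.self_of_nhds
  have hs := symm_of_mul_eq_one hx hinv.self_of_nhds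
  have hd := metricDeriv_symm hsymm
  have hdivergence := sum_pd_Chr hx hinv hg id (fun _ => m) (fun _ => n)
  have hdiv := contract_divCovector_mul (d := metricDeriv g x) hs
    (christoffelFirst (metricDeriv g x) m n)
  simp only [mul_comm (metricDeriv g x _ _ _)] at hdiv
  have htrace := sum_pd_Chr hx hinv hg (fun _ => n) id (fun _ => m)
  have htrace_inner := tensorInner_christoffelFirst_left (h := ginv x) hd m n
  simp only [id_eq] at hdivergence htrace
  rw [RicCoord, hdivergence, ← hdiv, htrace, sum_Chr_mul_Chr_trace hs, sum_Chr_mul_Chr_swap hs,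
    tensorInner_christoffelFirst_transpose hd, contract_gaugeCovector_mul]
  rw [tensorInner] at htrace_inner
  linear_combination htrace_inner

lemma Pterm_eq (m n : Fin 4) :
    Pterm g ginv x m n
      = 1 / 4 * (traceCovector (ginv x) (metricDeriv g x) m
          * traceCovector (ginv x) (metricDeriv g x) n)
        - 1 / 2 * tensorInner (ginv x) (metricDeriv g x m) (metricDeriv g x n) := by
  simp only [traceCovector, tensorInner, ← contract₂_mul, contract₂_eq_sum, ← mul_mul_mul_comm,
    Pterm, metricDeriv]

lemma Qterm_eq (hs : ∀ a b, ginv x a b = ginv x b a) (m n : Fin 4) :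
    Qterm g ginv x m n
      = tensorInner (ginv x) (fun a b => metricDeriv g x a b m) (fun a b => metricDeriv g x a b n)
        - (tensorInner (ginv x) (fun a b => metricDeriv g x a b m)
            (fun a b => metricDeriv g x b a n)
          - divCovector (ginv x) (metricDeriv g x) m * divCovector (ginv x) (metricDeriv g x) n)
        + (tensorInner (ginv x) (fun a b => metricDeriv g x a b n) (metricDeriv g x m)
          - contract (ginv x) fun a b =>
            divCovector (ginv x) (metricDeriv g x) a * metricDeriv g x m b n)
        + (tensorInner (ginv x) (fun a b => metricDeriv g x a b m) (metricDeriv g x n)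
          - contract (ginv x) fun a b =>
            divCovector (ginv x) (metricDeriv g x) a * metricDeriv g x n b m)
        + 1 / 2 * (contract (ginv x) (fun a b =>
            traceCovector (ginv x) (metricDeriv g x) a * metricDeriv g x m b n)
          - traceCovector (ginv x) (metricDeriv g x) m * divCovector (ginv x) (metricDeriv g x) n)
        + 1 / 2 * (contract (ginv x) (fun a b =>
            traceCovector (ginv x) (metricDeriv g x) a * metricDeriv g x n b m)
          - traceCovector (ginv x) (metricDeriv g x) n
            * divCovector (ginv x) (metricDeriv g x) m) := by
  have hinner m n : tensorInner (ginv x) (fun a b => metricDeriv g x a b n) (metricDeriv g x m)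
      = contract₂ (ginv x) fun a a' b b' => metricDeriv g x m a' b' * metricDeriv g x a b n := by
    simp only [tensorInner, mul_comm]
  have hsquare : tensorInner (ginv x) (fun a b => metricDeriv g x a b m)
        (fun a b => metricDeriv g x a b n)
      = ∑ a, ∑ a', ∑ b, ∑ b', metricDeriv g x a b m * ginv x a a' * ginv x b b'
          * metricDeriv g x a' b' n := by
    simp only [tensorInner, contract₂_eq_sum, mul_assoc, mul_left_comm (metricDeriv g x _ _ m)]
  simp only [hsquare, hinner, contract_divCovector_mul hs, contract_traceCovector_mul hs,
    divCovector_mul_divCovector hs, traceCovector_mul_divCovector hs]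
  simp only [tensorInner, ← contract₂_sub]
  simp only [contract₂_eq_sum, Qterm, metricDeriv]

lemma Pterm_add_Qterm (hs : ∀ a b, ginv x a b = ginv x b a) (m n : Fin 4) :
    Pterm g ginv x m n + Qterm g ginv x m n
      = tensorInner (ginv x) (fun a b => metricDeriv g x a b m) (fun a b => metricDeriv g x a b n)
        - tensorInner (ginv x) (fun a b => metricDeriv g x a b m) (fun a b => metricDeriv g x b a n)
        - 1 / 2 * tensorInner (ginv x) (metricDeriv g x m) (metricDeriv g x n)
        + tensorInner (ginv x) (fun a b => metricDeriv g x a b n) (metricDeriv g x m)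
        + tensorInner (ginv x) (fun a b => metricDeriv g x a b m) (metricDeriv g x n)
        - contract (ginv x) (fun a b =>
            gaugeCovector (ginv x) (metricDeriv g x) a * metricDeriv g x m b n)
        - contract (ginv x) (fun a b =>
            gaugeCovector (ginv x) (metricDeriv g x) a * metricDeriv g x n b m)
        + gaugeCovector (ginv x) (metricDeriv g x) m
          * gaugeCovector (ginv x) (metricDeriv g x) n := by
  rw [Pterm_eq, Qterm_eq hs, contract_gaugeCovector_mul, contract_gaugeCovector_mul,
    gaugeCovector_eq_divCovector_sub, gaugeCovector_eq_divCovector_sub]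
  ring

lemma redBox_add_two_mul_RicCoord (hsymm : ∀ᶠ y in 𝓝 x, ∀ a b, g y a b = g y b a)
    (hinv : ∀ᶠ y in 𝓝 x, Matrix.of (ginv y) * Matrix.of (g y) = 1)
    (hg : ∀ a b, ContDiffAt ℝ 2 (fun y => g y a b) x) (m n : Fin 4) :
    redBox ginv (fun y => g y m n) x + 2 * RicCoord g ginv x m n
      = Pterm g ginv x m n + Qterm g ginv x m n
        + pd m (fun y => gaugeCovector (ginv y) (metricDeriv g y) n) x
        + pd n (fun y => gaugeCovector (ginv y) (metricDeriv g y) m) x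
        + contract (ginv x) (fun a b =>
            gaugeCovector (ginv x) (metricDeriv g x) a * metricDeriv g x b m n)
        - gaugeCovector (ginv x) (metricDeriv g x) m
          * gaugeCovector (ginv x) (metricDeriv g x) n := by
  have hx := hsymm.self_of_nhds
  have hs := symm_of_mul_eq_one hx hinv.self_of_nhds
  have hd := metricDeriv_symm hsymm
  have hwave : redBox ginv (fun y => g y m n) x
      = contract (ginv x) fun a b => metricHessian g x a b m n := rfl
  rw [hwave, contract_hessian_eq hs (metricHessian_comm hg) (metricHessian_symm hsymm),
    two_mul_RicCoord hsymm hinv hg, Pterm_add_Qterm hs, pd_gaugeCovector hx hinv hg,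
    pd_gaugeCovector hx hinv hg, tensorInner_gaugeSymbol_left, tensorInner_gaugeSymbol_left,
    contract_mul_christoffelFirst hd,
    tensorInner_comm hs (metricDeriv g x n) (metricDeriv g x m)]
  ring

lemma Gterm_eq {Gc : (Fin 4 → ℝ) → Fin 4 → ℝ} (hsymm : ∀ a b, g x a b = g x b a)
    (hinv : Matrix.of (ginv x) * Matrix.of (g x) = 1)
    (hwave : ∀ᶠ y in 𝓝 x, ∀ m,
      gaugeCovector (ginv y) (metricDeriv g y) m = -∑ n, g y m n * Gc y n) (m n : Fin 4) :
    Gterm g Gc x m n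
      = pd m (fun y => gaugeCovector (ginv y) (metricDeriv g y) n) x
        + pd n (fun y => gaugeCovector (ginv y) (metricDeriv g y) m) x
        + contract (ginv x) (fun a b =>
            gaugeCovector (ginv x) (metricDeriv g x) a * metricDeriv g x b m n)
        - gaugeCovector (ginv x) (metricDeriv g x) m
          * gaugeCovector (ginv x) (metricDeriv g x) n := by
  have hx := hwave.self_of_nhds
  have hpd k l : pd k (fun y => gaugeCovector (ginv y) (metricDeriv g y) l) x
      = -pd k (fun y => ∑ c, g y l c * Gc y c) x := by
    rw [← pd_neg]
    exact pd_congr (hwave.mono fun _ hy => hy l)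
  have hfirst : contract (ginv x) (fun a b =>
        gaugeCovector (ginv x) (metricDeriv g x) a * metricDeriv g x b m n)
      = -∑ b, Gc x b * metricDeriv g x b m n := by
    simp only [hx, neg_mul (∑ n, g x _ n * Gc x n), contract_neg,
      contract_lower_mul hsymm hinv]
  have hquadratic : gaugeCovector (ginv x) (metricDeriv g x) m
        * gaugeCovector (ginv x) (metricDeriv g x) n
      = ∑ a, ∑ b, g x a n * g x b m * Gc x a * Gc x b := by
    rw [hx, hx, neg_mul_neg, mul_comm, sum_mul_sum]
    refine sum_congr rfl fun a _ => sum_congr rfl fun b _ => ?_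
    rw [hsymm n a, hsymm m b]
    ring
  rw [hpd, hpd, hfirst, hquadratic, ← sub_eq_add_neg, ← sub_eq_add_neg]
  rfl

end Metric

/-- Under the generalized wave coordinate condition and the reduced
Einstein–scalar field equations `Ric_{μν} = 2 ∂_μφ ∂_νφ`, the metric components satisfy
`⧠̃_g g_{μν} = P + Q + T + G` on `Ω`. -/
theorem stmt0 (Ω : Set (Fin 4 → ℝ)) (hΩ : IsOpen Ω)
    (g ginv : (Fin 4 → ℝ) → Fin 4 → Fin 4 → ℝ)
    (φ : (Fin 4 → ℝ) → ℝ) (Gc : (Fin 4 → ℝ) → Fin 4 → ℝ)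
    (hgsymm : ∀ x ∈ Ω, ∀ μ ν : Fin 4, g x μ ν = g x ν μ)
    (hginv : ∀ x ∈ Ω, ∀ α ν : Fin 4,
      (∑ β : Fin 4, ginv x α β * g x β ν) = if α = ν then 1 else 0)
    (hgreg : ∀ μ ν : Fin 4, ContDiffOn ℝ 2 (fun y => g y μ ν) Ω)
    (hφreg : ContDiffOn ℝ 1 φ Ω)
    (hGreg : ∀ μ : Fin 4, ContDiffOn ℝ 1 (fun y => Gc y μ) Ω)
    (hwave : ∀ x ∈ Ω, ∀ μ : Fin 4,
      (∑ α : Fin 4, ∑ β : Fin 4, ginv x α β * pd α (fun y => g y β μ) x)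
          - (1 / 2) * (∑ α : Fin 4, ∑ β : Fin 4, ginv x α β * pd μ (fun y => g y α β) x)
        = - ∑ ν : Fin 4, g x μ ν * Gc x ν)
    (hric : ∀ x ∈ Ω, ∀ μ ν : Fin 4, RicCoord g ginv x μ ν = 2 * pd μ φ x * pd ν φ x) :
    ∀ x ∈ Ω, ∀ μ ν : Fin 4,
      redBox ginv (fun y => g y μ ν) x
        = Pterm g ginv x μ ν + Qterm g ginv x μ ν + Tterm φ x μ ν + Gterm g Gc x μ ν := by
  intro x hx μ ν
  have hmem : ∀ᶠ y in 𝓝 x, y ∈ Ω := hΩ.mem_nhds hx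
  have hsymm : ∀ᶠ y in 𝓝 x, ∀ a b, g y a b = g y b a := hmem.mono hgsymm
  have hinv : ∀ᶠ y in 𝓝 x, Matrix.of (ginv y) * Matrix.of (g y) = 1 :=
    hmem.mono fun y hy => Matrix.ext fun a b => (hginv y hy a b).trans Matrix.one_apply.symm
  have hgauge : ∀ᶠ y in 𝓝 x, ∀ m,
      gaugeCovector (ginv y) (metricDeriv g y) m = -∑ n, g y m n * Gc y n :=
    hmem.mono fun y hy m => (gaugeCovector_eq_divCovector_sub m).trans (hwave y hy m)
  have hg a b : ContDiffAt ℝ 2 (fun y => g y a b) x := (hgreg a b).contDiffAt hmem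
  have hricci := redBox_add_two_mul_RicCoord hsymm hinv hg μ ν
  rw [hric x hx] at hricci
  rw [Tterm, Gterm_eq hsymm.self_of_nhds hinv.self_of_nhds hgauge]
  linear_combination hricci
end

section
/- There is a universal constant C such that for every C¹ scalar function ξ on ℝ^{1+3} and every point (t,x) with t ≥ 0 and x ≠ 0, writing q = |x| − t, one has (1 + t + |q|)|∂̄ξ|(t,x) + (1 + |q|)|∂ξ|(t,x) ≤ C Σ_Γ |Γξ|(t,x), where the sum ranges over the 11 Minkowskian commuting vector fields Γ. -/
open MeasureTheory

open scoped RealInnerProductSpace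

/-!
At a point `(t, x)` only the differential of `ξ` matters: a time derivative `τ` and a spatial
gradient `u`. Writing `r = |x|`, the rotations see `r` times the angular part of `u`, the boosts
form the vector `B = t u + τ x`, and the scaling field gives `S = t τ + ⟪x, u⟫`. Splitting `B` into
its radial and angular parts, one finds `(t + r) ∂_s = ½ (S + B_r)`, `(r - t) ∂_q = ½ (S - B_r)`,
and `t` times the angular gradient is the angular part of `B`. So `∂_s` and the angular derivatives
carry the weight `t + r`, which dominates `|r - t|` when `t ≥ 0`, while the remaining derivative
`∂_q` carries the weight `|r - t|`. The translations supply the constant terms of the weights.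
-/

lemma sqrt_sq_add_sq_le_abs_add_abs (a b : ℝ) : √(a ^ 2 + b ^ 2) ≤ |a| + |b| :=
  Real.sqrt_le_iff.mpr ⟨by positivity, by
    nlinarith [sq_abs a, sq_abs b, mul_nonneg (abs_nonneg a) (abs_nonneg b)]⟩

lemma abs_sub_le_add_of_nonneg {a b : ℝ} (ha : 0 ≤ a) (hb : 0 ≤ b) : |a - b| ≤ b + a :=
  abs_le.mpr ⟨by linarith, by linarith⟩

section InnerProductSpace

variable {E : Type*} [NormedAddCommGroup E] [InnerProductSpace ℝ E]

/-- The outgoing null derivative `∂_s = ½ (∂_t + ∂_r)` at the position `x` of a function with time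
derivative `τ` and spatial gradient `u`. -/
noncomputable def outgoingDeriv (x : E) (τ : ℝ) (u : E) : ℝ := (τ + ⟪x, u⟫ / ‖x‖) / 2

/-- The incoming null derivative `∂_q = ½ (∂_r - ∂_t)` at the position `x` of a function with time
derivative `τ` and spatial gradient `u`. -/
noncomputable def incomingDeriv (x : E) (τ : ℝ) (u : E) : ℝ := (⟪x, u⟫ / ‖x‖ - τ) / 2

/-- The angular part at the position `x` of a spatial gradient `u`, that is, its component
orthogonal to `x`; it is all of `u` when `x = 0`. -/
noncomputable def angularGrad (x u : E) : E := (ℝ ∙ x)ᗮ.starProjection u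

/-- The norm `|∂̄ξ|` of the derivatives tangent to the outgoing light cone through `(t, x)`, for a
function `ξ` with time derivative `τ` and spatial gradient `u`. -/
noncomputable def tangentialNorm (x : E) (τ : ℝ) (u : E) : ℝ :=
  √(outgoingDeriv x τ u ^ 2 + ‖angularGrad x u‖ ^ 2)

/-- The derivatives along the boosts `t ∂_i + x^i ∂_t`, gathered into one vector, of a function with
time derivative `τ` and spatial gradient `u`. -/
def boostDeriv (t : ℝ) (x : E) (τ : ℝ) (u : E) : E := t • u + τ • x

/-- The derivative along the scaling field `t ∂_t + x^i ∂_i` of a function with time derivative `τ`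
and spatial gradient `u`. -/
def scalingDeriv (t : ℝ) (x : E) (τ : ℝ) (u : E) : ℝ := t * τ + ⟪x, u⟫

lemma abs_inner_div_norm_le (x y : E) : |⟪x, y⟫ / ‖x‖| ≤ ‖y‖ := by
  rw [abs_div, abs_norm]
  exact div_le_of_le_mul₀ (norm_nonneg x) (norm_nonneg y)
    ((abs_real_inner_le_norm x y).trans_eq (mul_comm _ _))

lemma norm_sq_eq_radial_add_angular (x u : E) :
    ‖u‖ ^ 2 = (⟪x, u⟫ / ‖x‖) ^ 2 + ‖angularGrad x u‖ ^ 2 := by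
  have radial : ‖(ℝ ∙ x).starProjection u‖ ^ 2 = (⟪x, u⟫ / ‖x‖) ^ 2 := by
    rw [Submodule.starProjection_singleton, norm_smul, Real.norm_eq_abs, mul_pow, sq_abs]
    rcases eq_or_ne x 0 with rfl | hx
    · simp
    · have := norm_ne_zero_iff.mpr hx
      simp only [RCLike.ofReal_real_eq_id, id_eq]
      field_simp
  rw [(ℝ ∙ x).norm_sq_eq_add_norm_sq_starProjection u, radial, angularGrad]

lemma norm_sq_mul_norm_sq_angularGrad (x u : E) :
    ‖x‖ ^ 2 * ‖angularGrad x u‖ ^ 2 = ‖x‖ ^ 2 * ‖u‖ ^ 2 - ⟪x, u⟫ ^ 2 := by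
  rcases eq_or_ne x 0 with rfl | hx
  · simp
  · have := norm_ne_zero_iff.mpr hx
    rw [norm_sq_eq_radial_add_angular x u]
    field_simp
    ring

lemma norm_angularGrad_le (x u : E) : ‖angularGrad x u‖ ≤ ‖u‖ :=
  Submodule.norm_starProjection_apply_le _ u

lemma angularGrad_boostDeriv (t : ℝ) (x : E) (τ : ℝ) (u : E) :
    angularGrad x (boostDeriv t x τ u) = t • angularGrad x u := by
  simp only [angularGrad, boostDeriv, map_add, map_smul,
    Submodule.starProjection_orthogonalComplement_singleton_eq_zero, smul_zero, add_zero]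

lemma inner_boostDeriv (t : ℝ) (x : E) (τ : ℝ) (u : E) :
    ⟪x, boostDeriv t x τ u⟫ = t * ⟪x, u⟫ + τ * ‖x‖ ^ 2 := by
  rw [boostDeriv, inner_add_right, inner_smul_right, inner_smul_right, real_inner_self_eq_norm_sq]

lemma add_norm_mul_outgoingDeriv {x : E} (hx : x ≠ 0) (t τ : ℝ) (u : E) :
    (t + ‖x‖) * outgoingDeriv x τ u =
      (scalingDeriv t x τ u + ⟪x, boostDeriv t x τ u⟫ / ‖x‖) / 2 := by
  have := norm_ne_zero_iff.mpr hx
  rw [inner_boostDeriv, outgoingDeriv, scalingDeriv]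
  field_simp
  ring

lemma norm_sub_mul_incomingDeriv {x : E} (hx : x ≠ 0) (t τ : ℝ) (u : E) :
    (‖x‖ - t) * incomingDeriv x τ u =
      (scalingDeriv t x τ u - ⟪x, boostDeriv t x τ u⟫ / ‖x‖) / 2 := by
  have := norm_ne_zero_iff.mpr hx
  rw [inner_boostDeriv, incomingDeriv, scalingDeriv]
  field_simp
  ring

lemma abs_add_norm_mul_abs_outgoingDeriv_le {x : E} (hx : x ≠ 0) (t τ : ℝ) (u : E) :
    |t + ‖x‖| * |outgoingDeriv x τ u| ≤ (|scalingDeriv t x τ u| + ‖boostDeriv t x τ u‖) / 2 := by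
  rw [← abs_mul, add_norm_mul_outgoingDeriv hx, abs_div, abs_two]
  gcongr
  exact (abs_add_le _ _).trans (add_le_add_right (abs_inner_div_norm_le _ _) _)

lemma abs_norm_sub_mul_abs_incomingDeriv_le {x : E} (hx : x ≠ 0) (t τ : ℝ) (u : E) :
    |‖x‖ - t| * |incomingDeriv x τ u| ≤ (|scalingDeriv t x τ u| + ‖boostDeriv t x τ u‖) / 2 := by
  rw [← abs_mul, norm_sub_mul_incomingDeriv hx, abs_div, abs_two]
  gcongr
  exact (abs_sub _ _).trans (add_le_add_right (abs_inner_div_norm_le _ _) _)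

lemma abs_mul_norm_angularGrad_le (t : ℝ) (x : E) (τ : ℝ) (u : E) :
    |t| * ‖angularGrad x u‖ ≤ ‖boostDeriv t x τ u‖ := by
  rw [← Real.norm_eq_abs, ← norm_smul, ← angularGrad_boostDeriv t x τ u]
  exact norm_angularGrad_le x _

lemma time_sq_add_norm_sq_eq_null_decomposition (x : E) (τ : ℝ) (u : E) :
    τ ^ 2 + ‖u‖ ^ 2 =
      2 * outgoingDeriv x τ u ^ 2 + 2 * incomingDeriv x τ u ^ 2 + ‖angularGrad x u‖ ^ 2 := by
  rw [norm_sq_eq_radial_add_angular x u, outgoingDeriv, incomingDeriv]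
  ring

lemma tangentialNorm_le_abs_add_norm (x : E) (τ : ℝ) (u : E) :
    tangentialNorm x τ u ≤ |outgoingDeriv x τ u| + ‖angularGrad x u‖ := by
  simpa only [tangentialNorm, abs_norm] using
    sqrt_sq_add_sq_le_abs_add_abs (outgoingDeriv x τ u) ‖angularGrad x u‖

lemma tangentialNorm_le_sqrt_time_sq_add_norm_sq (x : E) (τ : ℝ) (u : E) :
    tangentialNorm x τ u ≤ √(τ ^ 2 + ‖u‖ ^ 2) := by
  refine Real.sqrt_le_sqrt ?_
  rw [time_sq_add_norm_sq_eq_null_decomposition x τ u]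
  nlinarith [sq_nonneg (outgoingDeriv x τ u), sq_nonneg (incomingDeriv x τ u)]

lemma sqrt_time_sq_add_norm_sq_le_null_decomposition (x : E) (τ : ℝ) (u : E) :
    √(τ ^ 2 + ‖u‖ ^ 2) ≤
      2 * |outgoingDeriv x τ u| + 2 * |incomingDeriv x τ u| + ‖angularGrad x u‖ := by
  rw [time_sq_add_norm_sq_eq_null_decomposition x τ u, ← sq_abs (outgoingDeriv x τ u),
    ← sq_abs (incomingDeriv x τ u)]
  refine Real.sqrt_le_iff.mpr ⟨by positivity, ?_⟩
  have hs := abs_nonneg (outgoingDeriv x τ u)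
  have hd := abs_nonneg (incomingDeriv x τ u)
  have ha := norm_nonneg (angularGrad x u)
  nlinarith [mul_nonneg hs hd, mul_nonneg hs ha, mul_nonneg hd ha]

theorem add_abs_norm_sub_mul_tangentialNorm_le {t : ℝ} (ht : 0 ≤ t) {x : E} (hx : x ≠ 0)
    (τ : ℝ) (u : E) :
    (t + |‖x‖ - t|) * tangentialNorm x τ u ≤
      |scalingDeriv t x τ u| + 3 * ‖boostDeriv t x τ u‖ + 2 * (‖x‖ * ‖angularGrad x u‖) := by
  have outgoing := abs_add_norm_mul_abs_outgoingDeriv_le hx t τ u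
  have angular := abs_mul_norm_angularGrad_le t x τ u
  rw [abs_of_nonneg (by positivity)] at outgoing angular
  have weight : t + |‖x‖ - t| ≤ 2 * (t + ‖x‖) := by
    linarith [abs_sub_le_add_of_nonneg (norm_nonneg x) ht, norm_nonneg x]
  calc (t + |‖x‖ - t|) * tangentialNorm x τ u
      ≤ 2 * (t + ‖x‖) * (|outgoingDeriv x τ u| + ‖angularGrad x u‖) := by
        exact mul_le_mul weight (tangentialNorm_le_abs_add_norm x τ u) (Real.sqrt_nonneg _)
          (by positivity)
    _ ≤ _ := by linarith

theorem abs_norm_sub_mul_sqrt_le {t : ℝ} (ht : 0 ≤ t) {x : E} (hx : x ≠ 0) (τ : ℝ) (u : E) :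
    |‖x‖ - t| * √(τ ^ 2 + ‖u‖ ^ 2) ≤
      2 * |scalingDeriv t x τ u| + 3 * ‖boostDeriv t x τ u‖ + ‖x‖ * ‖angularGrad x u‖ := by
  have outgoing := abs_add_norm_mul_abs_outgoingDeriv_le hx t τ u
  have incoming := abs_norm_sub_mul_abs_incomingDeriv_le hx t τ u
  have angular := abs_mul_norm_angularGrad_le t x τ u
  rw [abs_of_nonneg (by positivity)] at outgoing angular
  have weight := abs_sub_le_add_of_nonneg (norm_nonneg x) ht
  calc |‖x‖ - t| * √(τ ^ 2 + ‖u‖ ^ 2)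
      ≤ |‖x‖ - t| *
          (2 * |outgoingDeriv x τ u| + 2 * |incomingDeriv x τ u| + ‖angularGrad x u‖) := by
        gcongr
        exact sqrt_time_sq_add_norm_sq_le_null_decomposition x τ u
    _ = 2 * (|‖x‖ - t| * |outgoingDeriv x τ u|) + 2 * (|‖x‖ - t| * |incomingDeriv x τ u|)
          + |‖x‖ - t| * ‖angularGrad x u‖ := by ring
    _ ≤ 2 * ((t + ‖x‖) * |outgoingDeriv x τ u|) + 2 * (|‖x‖ - t| * |incomingDeriv x τ u|)
          + (t + ‖x‖) * ‖angularGrad x u‖ := by gcongr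
    _ ≤ _ := by linarith

theorem weighted_tangentialNorm_add_weighted_sqrt_le {t : ℝ} (ht : 0 ≤ t) {x : E} (hx : x ≠ 0)
    (τ : ℝ) (u : E) :
    (1 + t + |‖x‖ - t|) * tangentialNorm x τ u + (1 + |‖x‖ - t|) * √(τ ^ 2 + ‖u‖ ^ 2) ≤
      2 * (|τ| + ‖u‖) + 3 * |scalingDeriv t x τ u| + 6 * ‖boostDeriv t x τ u‖
        + 3 * (‖x‖ * ‖angularGrad x u‖) := by
  have full : √(τ ^ 2 + ‖u‖ ^ 2) ≤ |τ| + ‖u‖ := by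
    simpa only [abs_norm] using sqrt_sq_add_sq_le_abs_add_abs τ ‖u‖
  linarith [tangentialNorm_le_sqrt_time_sq_add_norm_sq x τ u,
    add_abs_norm_sub_mul_tangentialNorm_le ht hx τ u, abs_norm_sub_mul_sqrt_le ht hx τ u]

end InnerProductSpace

section EuclideanSpace

variable {ι : Type*} [Fintype ι]

lemma euclideanSpace_norm_le_sum_abs (x : EuclideanSpace ℝ ι) : ‖x‖ ≤ ∑ i, |x i| := by
  refine (sq_le_sq₀ (norm_nonneg x) (by positivity)).mp ?_
  simpa only [EuclideanSpace.real_norm_sq_eq, sq_abs] using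
    Finset.sum_sq_le_sq_sum_of_nonneg fun i (_ : i ∈ Finset.univ) => abs_nonneg (x i)

lemma lagrange_identity (x u : EuclideanSpace ℝ ι) :
    (1 / 2) * ∑ i, ∑ j, (x i * u j - x j * u i) ^ 2 = ‖x‖ ^ 2 * ‖u‖ ^ 2 - ⟪x, u⟫ ^ 2 := by
  have expand (i j : ι) : (x i * u j - x j * u i) ^ 2 =
      x i ^ 2 * u j ^ 2 + u i ^ 2 * x j ^ 2 - 2 * ((u i * x i) * (u j * x j)) := by ring
  simp only [expand, Finset.sum_add_distrib, Finset.sum_sub_distrib, ← Finset.mul_sum,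
    ← Finset.sum_mul, EuclideanSpace.real_norm_sq_eq, PiLp.inner_apply, RCLike.inner_apply,
    conj_trivial]
  ring

lemma norm_mul_norm_angularGrad_le (x u : EuclideanSpace ℝ ι) :
    ‖x‖ * ‖angularGrad x u‖ ≤ ∑ i, ∑ j, |x i * u j - x j * u i| := by
  refine (sq_le_sq₀ (by positivity) (by positivity)).mp ?_
  calc (‖x‖ * ‖angularGrad x u‖) ^ 2
      = (1 / 2) * ∑ i, ∑ j, (x i * u j - x j * u i) ^ 2 := by
        rw [lagrange_identity, mul_pow, norm_sq_mul_norm_sq_angularGrad]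
    _ ≤ ∑ i, ∑ j, |x i * u j - x j * u i| ^ 2 := by
        simp only [sq_abs]
        exact mul_le_of_le_one_left (by positivity) (by norm_num)
    _ ≤ (∑ i, ∑ j, |x i * u j - x j * u i|) ^ 2 := by
        simp only [← Fintype.sum_prod_type']
        exact Finset.sum_sq_le_sq_sum_of_nonneg fun _ _ => abs_nonneg _

lemma half_sum_sum_sq_eq_norm_sq_angularGrad {x : EuclideanSpace ℝ ι} (hx : x ≠ 0)
    (u : EuclideanSpace ℝ ι) :
    (1 / 2) * ∑ i, ∑ j, (x i / ‖x‖ * u j - x j / ‖x‖ * u i) ^ 2 = ‖angularGrad x u‖ ^ 2 := by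
  have := norm_ne_zero_iff.mpr hx
  have scale (i j : ι) : (x i / ‖x‖ * u j - x j / ‖x‖ * u i) ^ 2 =
      (x i * u j - x j * u i) ^ 2 / ‖x‖ ^ 2 := by field_simp
  simp only [scale, ← Finset.sum_div]
  rw [← mul_div_assoc, lagrange_identity, ← norm_sq_mul_norm_sq_angularGrad]
  field_simp

end EuclideanSpace

lemma sum_sum_abs_minors_fin_three (a b : Fin 3 → ℝ) :
    ∑ i, ∑ j, |a i * b j - a j * b i| =
      2 * (|a 0 * b 1 - a 1 * b 0| + |a 0 * b 2 - a 2 * b 0| + |a 1 * b 2 - a 2 * b 1|) := by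
  simp only [Fin.sum_univ_three, sub_self, abs_zero]
  rw [abs_sub_comm (a 1 * b 0), abs_sub_comm (a 2 * b 0), abs_sub_comm (a 2 * b 1)]
  ring

section Spacetime

/-- The spatial part of a vector of `ℝ^{1+n}`, whose time component has index `0`, as a vector
carrying the Euclidean rather than the supremum norm. -/
def spatial {n : ℕ} (v : Fin (n + 1) → ℝ) : EuclideanSpace ℝ (Fin n) := WithLp.toLp 2 (Fin.tail v)

lemma spatial_apply {n : ℕ} (v : Fin (n + 1) → ℝ) (i : Fin n) : spatial v i = v i.succ := rfl

variable (ξ : (Fin 4 → ℝ) → ℝ) (p : Fin 4 → ℝ)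

/-- The spatial gradient `(∂_1 ξ, ∂_2 ξ, ∂_3 ξ)` at the spacetime point `p`. -/
noncomputable def spatialGrad : EuclideanSpace ℝ (Fin 3) := spatial fun μ => pd μ ξ p

lemma spatialGrad_apply (i : Fin 3) : spatialGrad ξ p i = pd i.succ ξ p := rfl

lemma rad_eq_norm_spatial : rad p = ‖spatial p‖ := by
  simp only [rad, EuclideanSpace.norm_eq, spatial_apply, Real.norm_eq_abs, sq_abs]

lemma derivNorm_eq_sqrt : derivNorm ξ p = √(pd 0 ξ p ^ 2 + ‖spatialGrad ξ p‖ ^ 2) := by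
  rw [derivNorm, derivNormSq, Fin.sum_univ_succ, EuclideanSpace.real_norm_sq_eq]
  rfl

lemma dS_eq_outgoingDeriv : dS ξ p = outgoingDeriv (spatial p) (pd 0 ξ p) (spatialGrad ξ p) := by
  have radial : ∑ i : Fin 3, p i.succ / rad p * pd i.succ ξ p =
      ⟪spatial p, spatialGrad ξ p⟫ / ‖spatial p‖ := by
    simp only [rad_eq_norm_spatial, PiLp.inner_apply, RCLike.inner_apply, conj_trivial,
      spatial_apply, spatialGrad_apply, Finset.sum_div]
    exact Finset.sum_congr rfl fun i _ => by ring
  rw [dS, radial, outgoingDeriv]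
  ring

variable {p} in
lemma goodNorm_eq_tangentialNorm (hp : spatial p ≠ 0) :
    goodNorm ξ p = tangentialNorm (spatial p) (pd 0 ξ p) (spatialGrad ξ p) := by
  have angular : angSq ξ p = ‖angularGrad (spatial p) (spatialGrad ξ p)‖ ^ 2 := by
    rw [angSq, rad_eq_norm_spatial]
    exact half_sum_sum_sq_eq_norm_sq_angularGrad hp (spatialGrad ξ p)
  rw [goodNorm, goodNormSq, dS_eq_outgoingDeriv, angular, tangentialNorm]

lemma fderiv_apply_self_eq_scalingDeriv :
    fderiv ℝ ξ p p = scalingDeriv (p 0) (spatial p) (pd 0 ξ p) (spatialGrad ξ p) := by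
  calc fderiv ℝ ξ p p = ∑ μ, p μ * pd μ ξ p := by
        conv_lhs => arg 2; rw [pi_eq_sum_univ' p]
        simp only [map_sum, map_smul, smul_eq_mul, pd]
    _ = _ := by
        rw [Fin.sum_univ_succ, scalingDeriv]
        simp only [PiLp.inner_apply, RCLike.inner_apply, conj_trivial, spatial_apply,
          spatialGrad_apply, mul_comm]

lemma sum_abs_fderiv_minkVF :
    ∑ k, |fderiv ℝ ξ p (minkVF k p)| =
      |pd 0 ξ p| + ∑ i, |spatialGrad ξ p i|
        + (1 / 2) * ∑ i, ∑ j, |spatial p i * spatialGrad ξ p j - spatial p j * spatialGrad ξ p i|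
        + ∑ i, |boostDeriv (p 0) (spatial p) (pd 0 ξ p) (spatialGrad ξ p) i|
        + |scalingDeriv (p 0) (spatial p) (pd 0 ξ p) (spatialGrad ξ p)| := by
  rw [← fderiv_apply_self_eq_scalingDeriv, sum_sum_abs_minors_fin_three]
  simp only [minkVF, Fin.isValue, Matrix.cons_val', Matrix.cons_val_fin_one, Fin.sum_univ_succ,
    Matrix.cons_val_zero, Matrix.cons_val_succ, map_sub, map_smul, smul_eq_mul, map_add,
    Finset.univ_unique, Fin.default_eq_zero, Finset.sum_singleton, pd, spatialGrad_apply,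
    Fin.succ_zero_eq_one, Fin.succ_one_eq_two, Fin.reduceSucc, boostDeriv, PiLp.add_apply,
    PiLp.smul_apply, spatial_apply, mul_comm (fderiv ℝ ξ p _)]
  ring

end Spacetime

theorem stmt2_general {ξ : (Fin 4 → ℝ) → ℝ} {ξ' : (Fin 4 → ℝ) →L[ℝ] ℝ} {p : Fin 4 → ℝ}
    (hξ : HasFDerivAt ξ ξ' p) (ht : 0 ≤ p 0) (hr : 0 < rad p) :
    (1 + p 0 + |rad p - p 0|) * goodNorm ξ p + (1 + |rad p - p 0|) * derivNorm ξ p ≤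
      6 * ∑ k : Fin 11, |ξ' (minkVF k p)| := by
  have hp : spatial p ≠ 0 := norm_pos_iff.mp (rad_eq_norm_spatial p ▸ hr)
  have gradient := euclideanSpace_norm_le_sum_abs (spatialGrad ξ p)
  have boosts := euclideanSpace_norm_le_sum_abs
    (boostDeriv (p 0) (spatial p) (pd 0 ξ p) (spatialGrad ξ p))
  have rotations := norm_mul_norm_angularGrad_le (spatial p) (spatialGrad ξ p)
  have key := weighted_tangentialNorm_add_weighted_sqrt_le ht hp (pd 0 ξ p) (spatialGrad ξ p)
  have fields := sum_abs_fderiv_minkVF ξ p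
  rw [← hξ.fderiv, goodNorm_eq_tangentialNorm ξ hp, derivNorm_eq_sqrt, rad_eq_norm_spatial]
  linarith [abs_nonneg (pd 0 ξ p), norm_nonneg (spatialGrad ξ p),
    abs_nonneg (scalingDeriv (p 0) (spatial p) (pd 0 ξ p) (spatialGrad ξ p))]

/-- There is a universal constant `C` such that for every `C¹` scalar
function `ξ` on `ℝ^{1+3}` and every point `(t,x)` with `t ≥ 0`, `x ≠ 0`, writing
`q = |x| − t`, one has
`(1 + t + |q|)|∂̄ξ| + (1 + |q|)|∂ξ| ≤ C Σ_Γ |Γξ|`, the sum running over the 11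
Minkowskian commuting vector fields. -/
theorem stmt2 :
    ∃ C > (0 : ℝ), ∀ ξ : (Fin 4 → ℝ) → ℝ, ContDiff ℝ 1 ξ →
      ∀ p : Fin 4 → ℝ, 0 ≤ p 0 → 0 < rad p →
        (1 + p 0 + |rad p - p 0|) * goodNorm ξ p + (1 + |rad p - p 0|) * derivNorm ξ p
          ≤ C * ∑ k : Fin 11, |fderiv ℝ ξ p (minkVF k p)| :=
  ⟨6, by norm_num, fun _ hξ p ht hr =>
    stmt2_general (hξ.differentiable one_ne_zero p).hasFDerivAt ht hr⟩
end

section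
/- (Weighted Klainerman–Sobolev inequality.) For each γ ∈ (0,1/8] there exists a constant C such that for every ξ ∈ C_c^∞(ℝ^{1+3}), every t ≥ 0 and every x ∈ ℝ³, |ξ(t,x)| (1 + t + |x|) (1 + ||x| − t|)^{1/2} w(|x| − t)^{1/2} ≤ C Σ_{|I| ≤ 3} ‖w(|·| − t)^{1/2} (Γ^I ξ)(t,·)‖_{L²(ℝ³)}, where the sum ranges over all compositions Γ^I of at most three Minkowskian commuting vector fields (including the empty composition). -/
open MeasureTheory

/-!
Put `r = |x|`, `q = r - t` and `L = (1 + |q|) / 4`. Since `(t² - |z|²) ∂_v` is a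
combination of boosts, scaling and rotations with coefficients at most `(t + |z|) |v|`,
the field `∂_v` is a bounded combination of Minkowskian fields near `x` as soon as `|v| ≤
L`; if `v` is tangent to the sphere through `z`, then `|v| ≤ |z|` suffices, by rotations
alone. So `x` is the corner of a unit cube chart all of whose coordinate fields are
bounded combinations of Minkowskian fields: a cube of side `L` if `1 + t + r ≤ 8 L`, and
otherwise a spherical box of thickness `L` and of angular size one. In either case the
Jacobian is at least a multiple of `(1 + t + r)² (1 + |q|)`, and the weight varies by a
bounded factor. It remains to bound `ξ²` at a corner of the unit cube by the integral of
`∑ (Γ^I ξ)²`, `|I| ≤ 3`: a one-dimensional Sobolev inequality in each coordinate costs one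
derivative, which turns the sum over `|I| ≤ m` into the sum over `|I| ≤ m + 1`.
-/

open Set Function Finset Matrix
open scoped ENNReal

section CubeSobolev

lemma le_mul_integral_of_norm_deriv_le {f f' g : ℝ → ℝ} {B a : ℝ} (ha : a ∈ Icc (0 : ℝ) 1)
    (hf : ∀ u ∈ Icc (0 : ℝ) 1, HasDerivAt f (f' u) u) (hf' : ∀ u ∈ Icc (0 : ℝ) 1, ‖f' u‖ ≤ B * g u)
    (hfg : ∀ u ∈ Icc (0 : ℝ) 1, f u ≤ g u) (hg : Continuous g) :
    f a ≤ (1 + B) * ∫ u in Icc (0 : ℝ) 1, g u := by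
  set I := ∫ u in Icc (0 : ℝ) 1, g u
  have hgI : ∀ {s : Set ℝ}, s ⊆ Icc 0 1 → IntegrableOn g s := fun hs ↦
    (hg.continuousOn.integrableOn_Icc (μ := volume)).mono_set hs
  have osc : ∀ u v, u ∈ Icc (0 : ℝ) 1 → v ∈ Icc (0 : ℝ) 1 → u ≤ v → |f v - f u| ≤ B * I := by
    intro u v hu hv huv
    have hsub : Icc u v ⊆ Icc 0 1 := Icc_subset_Icc hu.1 hv.2
    have hbound : ∀ y ∈ Icc (0 : ℝ) 1, 0 ≤ B * g y := fun y hy ↦ (norm_nonneg _).trans (hf' y hy)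
    calc |f v - f u| ≤ ∫ y in u..v, B * g y := by
          refine norm_sub_le_integral_of_norm_deriv_le_of_le huv
            (fun y hy ↦ (hf y (hsub hy)).continuousAt.continuousWithinAt)
            (fun y hy ↦
              (hf y (hsub (Ioo_subset_Icc_self hy))).differentiableAt.differentiableWithinAt)
            (.of_forall fun y hy ↦ ?_) ((hg.const_mul B).intervalIntegrable _ _)
          rw [(hf y (hsub (Ioo_subset_Icc_self hy))).deriv]
          exact hf' y (hsub (Ioo_subset_Icc_self hy))
      _ ≤ ∫ y in Icc 0 1, B * g y := by
          rw [intervalIntegral.integral_of_le huv, ← integral_Icc_eq_integral_Ioc]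
          exact setIntegral_mono_set ((hgI subset_rfl).const_mul B)
            ((ae_restrict_iff' measurableSet_Icc).2 (.of_forall hbound)) hsub.eventuallyLE
      _ = B * I := integral_const_mul _ _
  have pointwise : ∀ u ∈ Icc (0 : ℝ) 1, f a - B * I ≤ g u := by
    intro u hu
    have h := hfg u hu
    rcases le_total a u with hau | hua
    · linarith [neg_le_of_abs_le (osc a u ha hu hau)]
    · linarith [le_of_abs_le (osc u a hu ha hua)]
  have average : f a - B * I ≤ I := by
    simpa using setIntegral_mono_on (integrableOn_const (by simp)) (hgI subset_rfl)
      measurableSet_Icc pointwise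
  linarith

lemma le_pow_mul_lmarginal {ι : Type*} [DecidableEq ι] {X : ι → Type*}
    [∀ i, MeasurableSpace (X i)] {μ : ∀ i, Measure (X i)} [∀ i, SigmaFinite (μ i)]
    {K : ∀ i, Set (X i)} (hK : ∀ i, MeasurableSet (K i)) {F : ℕ → (∀ i, X i) → ℝ≥0∞} {c : ℝ≥0∞}
    {N : ℕ} (hF : ∀ m ≤ N, Measurable (F m))
    (hstep : ∀ m < N, ∀ s ∈ univ.pi K, ∀ i,
      F m s ≤ c * ∫⁻ u in K i, F (m + 1) (update s i u) ∂μ i)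
    (A : Finset ι) {m : ℕ} (hm : m + #A ≤ N) {s : ∀ i, X i} (hs : s ∈ univ.pi K) :
    F m s ≤ c ^ #A * (∫⋯∫⁻_A, F (m + #A) ∂fun i ↦ (μ i).restrict (K i)) s := by
  induction A using Finset.induction_on generalizing m s with
  | empty => simp
  | insert i A hi ih =>
    rw [card_insert_of_notMem hi] at hm ⊢
    calc F m s ≤ c * ∫⁻ u in K i, F (m + 1) (update s i u) ∂μ i := hstep m (by omega) s hs i
      _ ≤ c * ∫⁻ u in K i, c ^ #A * (∫⋯∫⁻_A, F (m + 1 + #A) ∂fun i ↦ (μ i).restrict (K i))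
            (update s i u) ∂μ i := by
          gcongr c * ?_
          refine setLIntegral_mono' (hK i) fun u hu ↦ ih (by omega) ?_
          exact (update_mem_pi_iff_of_mem hs).2 fun _ ↦ hu
      _ = c ^ (#A + 1) * (∫⋯∫⁻_insert i A, F (m + (#A + 1)) ∂fun i ↦ (μ i).restrict (K i)) s := by
          have hmeas := hF (m + 1 + #A) (by omega)
          rw [lmarginal_insert _ (by convert hmeas using 2; ring) hi, lintegral_const_mul,
            pow_succ', mul_assoc, add_right_comm, add_assoc]
          exact (hmeas.lmarginal _).comp (measurable_update s)

lemma le_mul_integral_update {ι : Type*} [Finite ι] [DecidableEq ι] {g G : (ι → ℝ) → ℝ}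
    {B : ℝ} (hg : Differentiable ℝ g) (hG : Continuous G) (hgG : ∀ s, g s ≤ G s) {s : ι → ℝ}
    (hs : s ∈ Icc (0 : ι → ℝ) 1) (i : ι)
    (hderiv : ∀ y ∈ Icc (0 : ι → ℝ) 1, |fderiv ℝ g y (Pi.single i 1)| ≤ B * G y) :
    g s ≤ (1 + B) * ∫ u in Icc (0 : ℝ) 1, G (update s i u) := by
  cases nonempty_fintype ι
  have hmem : ∀ u ∈ Icc (0 : ℝ) 1, update s i u ∈ Icc (0 : ι → ℝ) 1 := fun u hu ↦ by
    rw [← pi_univ_Icc] at hs ⊢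
    exact (update_mem_pi_iff_of_mem hs).2 fun _ ↦ hu
  simpa only [update_eq_self] using
    le_mul_integral_of_norm_deriv_le (f := fun u ↦ g (update s i u)) (a := s i)
      ⟨hs.1 i, hs.2 i⟩
      (fun u _ ↦ (hg _).hasFDerivAt.comp_hasDerivAt u (hasDerivAt_update s i u))
      (fun u hu ↦ hderiv _ (hmem u hu)) (fun u _ ↦ hgG _)
      (hG.comp (continuous_const.update i continuous_id))

variable {ι : Type*} [Fintype ι]

lemma lintegral_Icc_eq_lmarginal [DecidableEq ι] (f : (ι → ℝ) → ℝ≥0∞) (a b s : ι → ℝ) :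
    ∫⁻ x in Icc a b, f x =
      (∫⋯∫⁻_Finset.univ, f ∂fun i ↦ volume.restrict (Icc (a i) (b i))) s := by
  rw [← lintegral_eq_lmarginal_univ, ← Measure.restrict_pi_pi, pi_univ_Icc, ← volume_pi]

lemma lintegral_ofReal_of_isCompact {X : Type*} [MeasurableSpace X] [TopologicalSpace X]
    [OpensMeasurableSpace X] {μ : Measure X} [IsFiniteMeasureOnCompacts μ] {K : Set X} {f : X → ℝ}
    (hK : IsCompact K) (hKm : MeasurableSet K) (hf : Continuous f) (hf0 : ∀ x, 0 ≤ f x) :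
    ∫⁻ x in K, .ofReal (f x) ∂μ = .ofReal (∫ x in K, f x ∂μ) :=
  (ofReal_integral_eq_lintegral_ofReal (hf.continuousOn.integrableOn_compact' hK hKm)
    (.of_forall hf0)).symm

theorem le_pow_card_mul_integral_Icc [DecidableEq ι] {G : ℕ → (ι → ℝ) → ℝ} {B : ℝ} (hB : 0 ≤ B)
    (hcont : ∀ m ≤ Fintype.card ι, Continuous (G m)) (hnonneg : ∀ m s, 0 ≤ G m s)
    (hmono : ∀ m s, G m s ≤ G (m + 1) s)
    (hdiff : ∀ m < Fintype.card ι, Differentiable ℝ (G m))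
    (hderiv : ∀ m < Fintype.card ι, ∀ s ∈ Icc (0 : ι → ℝ) 1, ∀ i,
      |fderiv ℝ (G m) s (Pi.single i 1)| ≤ B * G (m + 1) s)
    {a : ι → ℝ} (ha : a ∈ Icc (0 : ι → ℝ) 1) :
    G 0 a ≤ (1 + B) ^ Fintype.card ι * ∫ s in Icc (0 : ι → ℝ) 1, G (Fintype.card ι) s := by
  have hstep : ∀ m < Fintype.card ι, ∀ s ∈ univ.pi fun _ : ι ↦ Icc (0 : ℝ) 1, ∀ i,
      ENNReal.ofReal (G m s) ≤ .ofReal (1 + B) *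
        ∫⁻ u in Icc (0 : ℝ) 1, .ofReal (G (m + 1) (update s i u)) := by
    intro m hm s hs i
    have hcont_update : Continuous fun u ↦ G (m + 1) (update s i u) :=
      (hcont _ hm).comp (continuous_const.update i continuous_id)
    rw [lintegral_ofReal_of_isCompact isCompact_Icc measurableSet_Icc hcont_update
      fun _ ↦ hnonneg _ _, ← ENNReal.ofReal_mul (by positivity)]
    exact ENNReal.ofReal_le_ofReal (le_mul_integral_update (hdiff m hm) (hcont _ hm) (hmono m)
      (by rwa [← pi_univ_Icc]) i fun y hy ↦ hderiv m hm y hy i)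
  have hsob := le_pow_mul_lmarginal (fun _ ↦ measurableSet_Icc)
    (fun m hm ↦ (hcont m hm).measurable.ennreal_ofReal) hstep Finset.univ
    (zero_add (Fintype.card ι)).le (s := a) (by rwa [← pi_univ_Icc] at ha)
  have h01 := lintegral_Icc_eq_lmarginal (fun s ↦ .ofReal (G (Fintype.card ι) s)) 0 1 a
  simp only [Pi.zero_apply, Pi.one_apply] at h01
  rw [zero_add, card_univ, ← h01,
    lintegral_ofReal_of_isCompact isCompact_Icc measurableSet_Icc (hcont _ le_rfl) (hnonneg _),
    ← ENNReal.ofReal_pow (by positivity), ← ENNReal.ofReal_mul (by positivity)] at hsob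
  exact (ENNReal.ofReal_le_ofReal_iff
    (mul_nonneg (by positivity) (integral_nonneg (hnonneg _)))).1 hsob

end CubeSobolev

section Weight

/-- A weight `w` in the variable `q = |x| - t` which varies by at most the factor `K` between points
whose distance is at most half of `1 + |q|`; the only property of `wgt γ` that the inequality
uses. -/
structure IsSlowlyVaryingWeight (K : ℝ) (w : ℝ → ℝ) : Prop where
  continuous : Continuous w
  nonneg : ∀ q, 0 ≤ w q
  one_le : 1 ≤ K
  le_mul : ∀ q q', |q' - q| ≤ (1 + |q|) / 2 → w q ≤ K * w q'

lemma rpow_le_rpow_abs_mul_rpow {a b c : ℝ} (ha : 0 < a) (hc : 0 < c) (hab : a ≤ c * b)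
    (hba : b ≤ c * a) (e : ℝ) : a ^ e ≤ c ^ |e| * b ^ e := by
  have hb : 0 < b := pos_of_mul_pos_right (ha.trans_le hab) hc.le
  rcases le_total 0 e with he | he
  · rw [abs_of_nonneg he, ← Real.mul_rpow hc.le hb.le]
    exact Real.rpow_le_rpow ha.le hab he
  · calc a ^ e ≤ (b / c) ^ e :=
          Real.rpow_le_rpow_of_nonpos (by positivity) (by rwa [div_le_iff₀' hc]) he
      _ = c ^ |e| * b ^ e := by
          rw [abs_of_nonpos he, Real.div_rpow hb.le hc.le, Real.rpow_neg hc.le, div_eq_inv_mul]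

lemma one_le_wgt (γ q : ℝ) : 1 ≤ wgt γ q := by
  unfold wgt
  split_ifs <;> exact le_add_of_nonneg_right (by positivity)

lemma continuous_wgt (γ : ℝ) : Continuous (wgt γ) := by
  have hpow : ∀ e : ℝ, Continuous fun q : ℝ ↦ 1 + (1 + |q|) ^ e := fun e ↦
    continuous_const.add <|
      (continuous_const.add continuous_abs).rpow_const fun q ↦ .inl (by positivity : 1 + |q| ≠ 0)
  refine (hpow _).if_le (hpow _) continuous_const continuous_id fun q hq ↦ ?_
  simp [← hq]

lemma one_add_abs_rpow_le {q q' : ℝ} (h : |q' - q| ≤ (1 + |q|) / 2) (e : ℝ) :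
    (1 + |q|) ^ e ≤ 2 ^ |e| * (1 + |q'|) ^ e :=
  rpow_le_rpow_abs_mul_rpow (by positivity) two_pos
    (by linarith [abs_sub_abs_le_abs_sub q q', abs_sub_comm q q', abs_nonneg q'])
    (by linarith [abs_sub_abs_le_abs_sub q' q, abs_nonneg q]) e

lemma one_add_abs_rpow_le_of_opposite_sign {q q' : ℝ} (h : |q' - q| ≤ (1 + |q|) / 2)
    (hsign : 0 ≤ q ↔ ¬ 0 ≤ q') (e : ℝ) : (1 + |q|) ^ e ≤ 2 ^ |e| := by
  have hq : |q| ≤ 1 := by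
    rcases le_or_gt 0 q with h0 | h0
    · rw [abs_of_nonneg h0] at h ⊢
      linarith [neg_le_of_abs_le h, not_le.1 (hsign.1 h0)]
    · rw [abs_of_neg h0] at h ⊢
      linarith [le_of_abs_le h, not_not.1 (mt hsign.2 h0.not_ge)]
  simpa using rpow_le_rpow_abs_mul_rpow (b := 1) (by positivity) two_pos (by linarith)
    (by linarith [abs_nonneg q]) e

theorem isSlowlyVaryingWeight_wgt (γ : ℝ) :
    IsSlowlyVaryingWeight (1 + 2 ^ |1 + 2 * γ| + 2 ^ |-(γ / 2)|) (wgt γ) where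
  continuous := continuous_wgt γ
  nonneg q := zero_le_one.trans (one_le_wgt γ q)
  one_le := by rw [add_assoc]; exact le_add_of_nonneg_right (by positivity)
  le_mul q q' h := by
    set K₁ : ℝ := 2 ^ |1 + 2 * γ|
    set K₂ : ℝ := 2 ^ |-(γ / 2)|
    have hK₁ : 0 < K₁ := by positivity
    have hK₂ : 0 < K₂ := by positivity
    have hw' := one_le_wgt γ q'
    have h₁ := one_add_abs_rpow_le h (1 + 2 * γ)
    have h₂ := one_add_abs_rpow_le h (-(γ / 2))
    by_cases hq : 0 ≤ q <;> by_cases hq' : 0 ≤ q'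
    all_goals simp only [wgt, hq, hq', if_true, if_false] at hw' ⊢
    · nlinarith
    · nlinarith [one_add_abs_rpow_le_of_opposite_sign h (by simp [hq, hq']) (1 + 2 * γ)]
    · nlinarith [one_add_abs_rpow_le_of_opposite_sign h (by simp [hq, hq']) (-(γ / 2))]
    · nlinarith

end Weight

section Fields

lemma contDiff_minkVF {n : WithTop ℕ∞} (k : Fin 11) : ContDiff ℝ n (minkVF k) := by
  fin_cases k <;> simp only [minkVF] <;> dsimp <;> fun_prop

lemma contDiff_gammaList {ξ : (Fin 4 → ℝ) → ℝ} {n : ℕ} (I : List (Fin 11))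
    (hξ : ContDiff ℝ (n + I.length : ℕ) ξ) : ContDiff ℝ n (GammaList I ξ) := by
  induction I generalizing n with
  | nil => exact hξ
  | cons k I ih =>
    have hI : ContDiff ℝ (n + 1 : ℕ) (GammaList I ξ) :=
      ih (by rwa [List.length_cons, ← add_assoc, add_right_comm] at hξ)
    exact (hI.fderiv_right (by norm_cast)).clm_apply (contDiff_minkVF k)

lemma hasCompactSupport_gammaList {ξ : (Fin 4 → ℝ) → ℝ} (hξ : HasCompactSupport ξ) :
    ∀ I : List (Fin 11), HasCompactSupport (GammaList I ξ)
  | [] => hξ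
  | k :: I => by
    refine ((hasCompactSupport_gammaList hξ I).fderiv (𝕜 := ℝ)).mono fun p hp h0 ↦ hp ?_
    simp only [GammaList, h0, _root_.zero_apply]

/-- The embedding of `ℝ³` into `ℝ^{1+3}` as the spatial hyperplane, `v ↦ spt 0 v`. -/
noncomputable def spatialEmb : (Fin 3 → ℝ) →L[ℝ] (Fin 4 → ℝ) :=
  LinearMap.toContinuousLinearMap
    { toFun := spt 0
      map_add' := fun u v ↦ by funext i; fin_cases i <;> simp [spt]
      map_smul' := fun c v ↦ by funext i; fin_cases i <;> simp [spt] }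

lemma spatialEmb_apply (v : Fin 3 → ℝ) : spatialEmb v = spt 0 v := rfl

lemma spt_eq_add_spatialEmb (t : ℝ) : spt t = fun y ↦ Pi.single 0 t + spatialEmb y := by
  funext y i
  fin_cases i <;> simp [spt, spatialEmb_apply]

lemma hasFDerivAt_spt (t : ℝ) (y : Fin 3 → ℝ) : HasFDerivAt (spt t) spatialEmb y := by
  rw [spt_eq_add_spatialEmb]
  exact spatialEmb.hasFDerivAt.const_add _

lemma continuous_spt (t : ℝ) : Continuous (spt t) :=
  continuous_iff_continuousAt.2 fun y ↦ (hasFDerivAt_spt t y).continuousAt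

lemma isClosedEmbedding_spt (t : ℝ) : Topology.IsClosedEmbedding (spt t) := by
  have hleft : LeftInverse (fun (p : Fin 4 → ℝ) (i : Fin 3) ↦ p i.succ) (spt t) := fun y ↦ by
    funext i
    fin_cases i <;> simp [spt]
  exact hleft.isClosedEmbedding (by fun_prop) (continuous_spt t)

end Fields

section Radius

lemma rad3_eq_norm (y : Fin 3 → ℝ) : rad3 y = ‖WithLp.toLp 2 y‖ := by
  simp [rad3, EuclideanSpace.norm_eq]

lemma rad3_nonneg (y : Fin 3 → ℝ) : 0 ≤ rad3 y := Real.sqrt_nonneg _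

lemma rad3_sq (y : Fin 3 → ℝ) : rad3 y ^ 2 = y ⬝ᵥ y := by
  rw [rad3, Real.sq_sqrt (Finset.sum_nonneg fun _ _ ↦ sq_nonneg _)]
  simp only [dotProduct, sq]

lemma continuous_rad3 : Continuous rad3 := by
  unfold rad3
  fun_prop

lemma rad3_smul (c : ℝ) (y : Fin 3 → ℝ) : rad3 (c • y) = |c| * rad3 y := by
  rw [rad3_eq_norm, rad3_eq_norm, WithLp.toLp_smul, norm_smul, Real.norm_eq_abs]

lemma abs_rad3_sub_rad3_le (y z : Fin 3 → ℝ) : |rad3 y - rad3 z| ≤ rad3 (y - z) := by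
  simp only [rad3_eq_norm, WithLp.toLp_sub]
  exact abs_norm_sub_norm_le _ _

lemma abs_apply_le_rad3 (y : Fin 3 → ℝ) (i : Fin 3) : |y i| ≤ rad3 y := by
  rw [rad3_eq_norm, ← Real.norm_eq_abs]
  exact PiLp.norm_apply_le (WithLp.toLp 2 y) i

lemma dotProduct_sq_add_rad3_crossProduct_sq (y z : Fin 3 → ℝ) :
    (y ⬝ᵥ z) ^ 2 + rad3 (y ⨯₃ z) ^ 2 = (rad3 y * rad3 z) ^ 2 := by
  rw [rad3_sq, cross_dot_cross, mul_pow, rad3_sq, rad3_sq, dotProduct_comm z y]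
  ring

lemma abs_dotProduct_le (y z : Fin 3 → ℝ) : |y ⬝ᵥ z| ≤ rad3 y * rad3 z :=
  abs_le_of_sq_le_sq
    (by nlinarith [dotProduct_sq_add_rad3_crossProduct_sq y z, sq_nonneg (rad3 (y ⨯₃ z))])
    (mul_nonneg (rad3_nonneg y) (rad3_nonneg z))

lemma rad3_crossProduct_le (y z : Fin 3 → ℝ) : rad3 (y ⨯₃ z) ≤ rad3 y * rad3 z := by
  refine le_of_sq_le_sq ?_ (mul_nonneg (rad3_nonneg y) (rad3_nonneg z))
  nlinarith [dotProduct_sq_add_rad3_crossProduct_sq y z, sq_nonneg (y ⬝ᵥ z)]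

end Radius

section MinkComb

/-- `V` is a combination of the values at `p` of the eleven Minkowskian fields, with coefficients
of absolute value at most `κ`. -/
def IsMinkComb (κ : ℝ) (p V : Fin 4 → ℝ) : Prop :=
  ∃ c : Fin 11 → ℝ, (∀ k, |c k| ≤ κ) ∧ ∑ k, c k • minkVF k p = V

namespace IsMinkComb

variable {κ κ' : ℝ} {p V V' : Fin 4 → ℝ}

lemma add (h : IsMinkComb κ p V) (h' : IsMinkComb κ' p V') : IsMinkComb (κ + κ') p (V + V') := by
  obtain ⟨c, hc, rfl⟩ := h
  obtain ⟨c', hc', rfl⟩ := h'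
  exact ⟨c + c', fun k ↦ (abs_add_le _ _).trans (add_le_add (hc k) (hc' k)), by
    simp only [Pi.add_apply, add_smul, Finset.sum_add_distrib]⟩

lemma smul (h : IsMinkComb κ p V) (a : ℝ) : IsMinkComb (|a| * κ) p (a • V) := by
  obtain ⟨c, hc, rfl⟩ := h
  refine ⟨a • c, fun k ↦ ?_, by simp only [Pi.smul_apply, smul_assoc, Finset.smul_sum]⟩
  rw [Pi.smul_apply, smul_eq_mul, abs_mul]
  exact mul_le_mul_of_nonneg_left (hc k) (abs_nonneg a)

lemma mono (h : IsMinkComb κ p V) (hκ : κ ≤ κ') : IsMinkComb κ' p V :=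
  let ⟨c, hc, hV⟩ := h
  ⟨c, fun k ↦ (hc k).trans hκ, hV⟩

end IsMinkComb

variable {t : ℝ} {v z : Fin 3 → ℝ}

lemma spt_zero_smul (a : ℝ) (v : Fin 3 → ℝ) : spt 0 (a • v) = a • spt 0 v :=
  map_smul spatialEmb a v

lemma sum_minkVF_spt (c : Fin 11 → ℝ) (t : ℝ) (z : Fin 3 → ℝ) :
    ∑ k, c k • minkVF k (spt t z) =
      spt (c 0 + c 7 * z 0 + c 8 * z 1 + c 9 * z 2 + c 10 * t)
        ![c 1 - c 4 * z 1 - c 5 * z 2 + c 7 * t + c 10 * z 0,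
          c 2 + c 4 * z 0 - c 6 * z 2 + c 8 * t + c 10 * z 1,
          c 3 + c 5 * z 0 + c 6 * z 1 + c 9 * t + c 10 * z 2] := by
  funext i
  fin_cases i <;> simp [Fin.sum_univ_succ, minkVF, spt] <;> ring

lemma isMinkComb_translation (p : Fin 4 → ℝ) (v : Fin 3 → ℝ) :
    IsMinkComb (rad3 v) p (spt 0 v) := by
  refine ⟨![0, v 0, v 1, v 2, 0, 0, 0, 0, 0, 0, 0], fun k ↦ ?_, ?_⟩
  · fin_cases k <;> simp [rad3_nonneg, abs_apply_le_rad3]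
  · funext i
    fin_cases i <;> simp [Fin.sum_univ_succ, minkVF, spt]

lemma isMinkComb_sq_smul_sub (t : ℝ) (z v : Fin 3 → ℝ) :
    IsMinkComb (rad3 z * rad3 v) (spt t z) (spt 0 (rad3 z ^ 2 • v - (z ⬝ᵥ v) • z)) := by
  set n := z ⨯₃ v with hn_def
  have hn : ∀ i, |n i| ≤ rad3 z * rad3 v := fun i ↦
    (abs_apply_le_rad3 n i).trans (rad3_crossProduct_le z v)
  refine ⟨![0, 0, 0, 0, n 2, -n 1, n 0, 0, 0, 0, 0], fun k ↦ ?_, ?_⟩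
  · fin_cases k <;> simp [hn, rad3_nonneg, mul_nonneg]
  · rw [sum_minkVF_spt, rad3_sq, hn_def, cross_apply]
    funext i
    fin_cases i <;>
      simp only [spt, Fin.zero_eta, Fin.mk_one, Fin.reduceFinMk, vec3_dotProduct, Pi.smul_apply,
        Pi.sub_apply, smul_eq_mul, Matrix.cons_val] <;> ring

lemma isMinkComb_rotation (t : ℝ) (hz : 0 < rad3 z) (hzv : z ⬝ᵥ v = 0) :
    IsMinkComb (rad3 v / rad3 z) (spt t z) (spt 0 v) := by
  have h := (isMinkComb_sq_smul_sub t z v).smul (rad3 z ^ 2)⁻¹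
  rw [hzv, zero_smul, sub_zero, spt_zero_smul, inv_smul_smul₀ (by positivity)] at h
  refine h.mono (le_of_eq ?_)
  rw [abs_of_pos (by positivity)]
  field_simp

-- The identity behind this is `(t² - r²) ∂_v = t (v · boosts) - (v ⬝ z) S - (z ⨯₃ v) · rotations`.
lemma isMinkComb_hyperbolic (ht : 0 ≤ t) (z v : Fin 3 → ℝ) :
    IsMinkComb ((t + rad3 z) * rad3 v) (spt t z) ((t ^ 2 - rad3 z ^ 2) • spt 0 v) := by
  set n := z ⨯₃ v with hn_def
  have hr := rad3_nonneg z
  have hv := rad3_nonneg v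
  have hn : ∀ i, |n i| ≤ (t + rad3 z) * rad3 v := fun i ↦ by
    nlinarith [(abs_apply_le_rad3 n i).trans (rad3_crossProduct_le z v), mul_nonneg ht hv]
  have hboost : ∀ i, |t * v i| ≤ (t + rad3 z) * rad3 v := fun i ↦ by
    rw [abs_mul, abs_of_nonneg ht]
    nlinarith [abs_apply_le_rad3 v i, mul_nonneg hr hv]
  have hscale : |v ⬝ᵥ z| ≤ (t + rad3 z) * rad3 v := by
    nlinarith [abs_dotProduct_le v z, mul_nonneg ht hv]
  refine ⟨![0, 0, 0, 0, -n 2, n 1, -n 0, t * v 0, t * v 1, t * v 2, -(v ⬝ᵥ z)], fun k ↦ ?_, ?_⟩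
  · fin_cases k <;> simp [hn, hboost, hscale, -abs_mul, mul_nonneg, add_nonneg, ht, hr, hv]
  · rw [sum_minkVF_spt, rad3_sq, ← spt_zero_smul, hn_def, cross_apply]
    funext i
    fin_cases i <;>
      simp only [spt, Fin.zero_eta, Fin.mk_one, Fin.reduceFinMk, vec3_dotProduct, Pi.smul_apply,
        smul_eq_mul, Matrix.cons_val] <;> ring

lemma isMinkComb_conformal (ht : 0 ≤ t) (z v : Fin 3 → ℝ) :
    IsMinkComb (2 * rad3 v) (spt t z) ((1 + |rad3 z - t|) • spt 0 v) := by
  have hr := rad3_nonneg z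
  have htrans := isMinkComb_translation (spt t z) v
  rcases (add_nonneg ht hr).eq_or_lt' with h0 | hpos
  · obtain ⟨rfl, hz⟩ : t = 0 ∧ rad3 z = 0 := ⟨by linarith, by linarith⟩
    rw [hz, sub_zero, abs_zero, add_zero, one_smul]
    exact htrans.mono (by linarith [rad3_nonneg v])
  · obtain ⟨ε, hε, hsign⟩ : ∃ ε : ℝ, |ε| = 1 ∧ |rad3 z - t| = ε * (t - rad3 z) := by
      rcases abs_choice (rad3 z - t) with h | h
      · exact ⟨-1, by simp, by rw [h]; ring⟩
      · exact ⟨1, by simp, by rw [h]; ring⟩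
    have hhyp := (isMinkComb_hyperbolic ht z v).smul (ε / (t + rad3 z))
    have hcoeff : ε / (t + rad3 z) * (t ^ 2 - rad3 z ^ 2) = |rad3 z - t| := by
      rw [hsign]
      field_simp
      ring
    rw [smul_smul, hcoeff] at hhyp
    convert htrans.add hhyp using 1
    · rw [abs_div, hε, abs_of_pos hpos]
      field_simp
      ring
    · rw [add_smul, one_smul]

lemma isMinkComb_one_of_four_mul_rad3_le (ht : 0 ≤ t) {r : ℝ}
    (hz : |rad3 z - r| ≤ (1 + |r - t|) / 2) (hv : 4 * rad3 v ≤ 1 + |r - t|) :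
    IsMinkComb 1 (spt t z) (spt 0 v) := by
  have hd : 0 < 1 + |rad3 z - t| := by positivity
  have h := (isMinkComb_conformal ht z v).smul (1 + |rad3 z - t|)⁻¹
  rw [inv_smul_smul₀ hd.ne'] at h
  refine h.mono ?_
  rw [abs_of_pos (inv_pos.2 hd), inv_mul_le_iff₀ hd]
  linarith [abs_sub_le r (rad3 z) t, abs_sub_comm r (rad3 z)]

end MinkComb

section GammaDensity

/-- The pointwise energy density `∑_{|I| ≤ m} |Γ^I ξ|²` whose weighted integrals over the
hyperplanes `t = const` are the right-hand side of the inequality. -/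
noncomputable def gammaDensity (m : ℕ) (ξ : (Fin 4 → ℝ) → ℝ) (p : Fin 4 → ℝ) : ℝ :=
  ∑ n ∈ Finset.range (m + 1), ∑ I : Fin n → Fin 11, (GammaList (List.ofFn I) ξ p) ^ 2

variable {m : ℕ} {ξ : (Fin 4 → ℝ) → ℝ} {p : Fin 4 → ℝ}

lemma gammaDensity_zero (ξ : (Fin 4 → ℝ) → ℝ) (p : Fin 4 → ℝ) : gammaDensity 0 ξ p = ξ p ^ 2 := by
  simp [gammaDensity, GammaList]

lemma gammaDensity_nonneg (m : ℕ) (ξ : (Fin 4 → ℝ) → ℝ) (p : Fin 4 → ℝ) : 0 ≤ gammaDensity m ξ p :=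
  Finset.sum_nonneg fun _ _ ↦ Finset.sum_nonneg fun _ _ ↦ sq_nonneg _

lemma gammaDensity_le_succ (m : ℕ) (ξ : (Fin 4 → ℝ) → ℝ) (p : Fin 4 → ℝ) :
    gammaDensity m ξ p ≤ gammaDensity (m + 1) ξ p := by
  rw [gammaDensity, gammaDensity, Finset.sum_range_succ _ (m + 1)]
  exact le_add_of_nonneg_right (Finset.sum_nonneg fun _ _ ↦ sq_nonneg _)

lemma sum_sq_gammaList_cons_le (m : ℕ) (ξ : (Fin 4 → ℝ) → ℝ) (p : Fin 4 → ℝ) :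
    ∑ n ∈ Finset.range (m + 1), ∑ I : Fin n → Fin 11, ∑ k,
      (GammaList (k :: List.ofFn I) ξ p) ^ 2 ≤ gammaDensity (m + 1) ξ p := by
  rw [gammaDensity, Finset.sum_range_succ' _ (m + 1)]
  refine le_add_of_le_of_nonneg (Finset.sum_le_sum fun n _ ↦ le_of_eq ?_)
    (Finset.sum_nonneg fun _ _ ↦ sq_nonneg _)
  rw [Finset.sum_comm, ← Fintype.sum_prod_type']
  refine Fintype.sum_equiv (Fin.consEquiv fun _ ↦ Fin 11) _ _ fun ⟨k, I⟩ ↦ ?_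
  simp [Fin.consEquiv]

lemma contDiff_gammaList_ofFn {k n : ℕ} (hξ : ContDiff ℝ (k + m : ℕ) ξ)
    (hn : n ∈ Finset.range (m + 1)) (I : Fin n → Fin 11) :
    ContDiff ℝ k (GammaList (List.ofFn I) ξ) := by
  have hnm : n ≤ m := Nat.lt_succ_iff.1 (Finset.mem_range.1 hn)
  refine contDiff_gammaList _ (hξ.of_le ?_)
  rw [List.length_ofFn]
  exact_mod_cast Nat.add_le_add_left hnm k

lemma contDiff_gammaDensity {k : ℕ} (hξ : ContDiff ℝ (k + m : ℕ) ξ) :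
    ContDiff ℝ k (gammaDensity m ξ) :=
  .sum fun _ hn ↦ .sum fun I _ ↦ (contDiff_gammaList_ofFn hξ hn I).pow 2

lemma IsMinkComb.fderiv_apply {κ : ℝ} {V : Fin 4 → ℝ} (hV : IsMinkComb κ p V) (I : List (Fin 11))
    (ξ : (Fin 4 → ℝ) → ℝ) : ∃ c : Fin 11 → ℝ, (∀ k, |c k| ≤ κ) ∧
      fderiv ℝ (GammaList I ξ) p V = ∑ k, c k * GammaList (k :: I) ξ p := by
  obtain ⟨c, hc, rfl⟩ := hV
  refine ⟨c, hc, ?_⟩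
  simp only [map_sum, map_smul, smul_eq_mul, GammaList]

lemma abs_two_mul_mul_sum_le {ι : Type*} [Fintype ι] {c : ι → ℝ} {κ : ℝ} (hc : ∀ k, |c k| ≤ κ)
    (a : ℝ) (b : ι → ℝ) :
    |2 * a * ∑ k, c k * b k| ≤ κ * (Fintype.card ι * a ^ 2 + ∑ k, b k ^ 2) := by
  calc |2 * a * ∑ k, c k * b k| ≤ ∑ k, |c k| * (2 * |a| * |b k|) := by
        rw [Finset.mul_sum]
        refine (Finset.abs_sum_le_sum_abs _ _).trans_eq (Finset.sum_congr rfl fun k _ ↦ ?_)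
        simp only [abs_mul, abs_two]
        ring
    _ ≤ ∑ k, κ * (a ^ 2 + b k ^ 2) := by
        refine Finset.sum_le_sum fun k _ ↦ ?_
        have hκ : 0 ≤ κ := (abs_nonneg _).trans (hc k)
        rw [← sq_abs a, ← sq_abs (b k)]
        exact mul_le_mul (hc k) (two_mul_le_add_sq _ _) (by positivity) hκ
    _ = κ * (Fintype.card ι * a ^ 2 + ∑ k, b k ^ 2) := by
        rw [← Finset.mul_sum, Finset.sum_add_distrib, Finset.sum_const, card_univ, nsmul_eq_mul]

lemma fderiv_gammaDensity_apply (hξ : ContDiff ℝ (m + 1 : ℕ) ξ) (p V : Fin 4 → ℝ) :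
    fderiv ℝ (gammaDensity m ξ) p V = ∑ n ∈ Finset.range (m + 1), ∑ I : Fin n → Fin 11,
      2 * GammaList (List.ofFn I) ξ p * fderiv ℝ (GammaList (List.ofFn I) ξ) p V := by
  have hdiff : ∀ n ∈ Finset.range (m + 1), ∀ I : Fin n → Fin 11,
      DifferentiableAt ℝ (GammaList (List.ofFn I) ξ) p := fun n hn I ↦
    (contDiff_gammaList_ofFn (k := 1) (by rwa [add_comm]) hn I).differentiable (by simp) p
  have h : HasFDerivAt (gammaDensity m ξ) _ p := .fun_sum fun n hn ↦
    .fun_sum fun I (_ : I ∈ Finset.univ) ↦ (hdiff n hn I).hasFDerivAt.pow 2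
  rw [h.fderiv]
  simp

lemma IsMinkComb.abs_fderiv_gammaDensity_le {κ : ℝ} {V : Fin 4 → ℝ} (hV : IsMinkComb κ p V)
    (hξ : ContDiff ℝ (m + 1 : ℕ) ξ) :
    |fderiv ℝ (gammaDensity m ξ) p V| ≤ 12 * κ * gammaDensity (m + 1) ξ p := by
  have hκ : 0 ≤ κ := let ⟨_, hc, _⟩ := hV; (abs_nonneg _).trans (hc 0)
  have hterm : ∀ I : List (Fin 11), |2 * GammaList I ξ p * fderiv ℝ (GammaList I ξ) p V| ≤
      κ * (11 * GammaList I ξ p ^ 2 + ∑ k, GammaList (k :: I) ξ p ^ 2) := fun I ↦ by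
    obtain ⟨c, hc, hcV⟩ := hV.fderiv_apply I ξ
    rw [hcV]
    simpa using abs_two_mul_mul_sum_le hc (GammaList I ξ p) fun k ↦ GammaList (k :: I) ξ p
  calc |fderiv ℝ (gammaDensity m ξ) p V|
      ≤ ∑ n ∈ Finset.range (m + 1), ∑ I : Fin n → Fin 11, κ *
          (11 * GammaList (List.ofFn I) ξ p ^ 2 + ∑ k, GammaList (k :: List.ofFn I) ξ p ^ 2) := by
        rw [fderiv_gammaDensity_apply hξ]
        refine (Finset.abs_sum_le_sum_abs _ _).trans (Finset.sum_le_sum fun n _ ↦ ?_)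
        exact (Finset.abs_sum_le_sum_abs _ _).trans (Finset.sum_le_sum fun I _ ↦ hterm _)
    _ = κ * (11 * gammaDensity m ξ p + ∑ n ∈ Finset.range (m + 1), ∑ I : Fin n → Fin 11, ∑ k,
          GammaList (k :: List.ofFn I) ξ p ^ 2) := by
        simp only [gammaDensity, ← Finset.mul_sum, Finset.sum_add_distrib]
    _ ≤ κ * (11 * gammaDensity (m + 1) ξ p + gammaDensity (m + 1) ξ p) := by
        gcongr
        · exact gammaDensity_le_succ m ξ p
        · exact sum_sq_gammaList_cons_le m ξ p
    _ = 12 * κ * gammaDensity (m + 1) ξ p := by ring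

section Integral

variable {w : ℝ → ℝ}

lemma integrable_weight_mul_gammaList_sq (hw : Continuous w) (hξ : ContDiff ℝ m ξ)
    (hsupp : HasCompactSupport ξ) (t : ℝ) {n : ℕ} (hn : n ∈ Finset.range (m + 1))
    (I : Fin n → Fin 11) :
    Integrable fun z ↦ w (rad3 z - t) * GammaList (List.ofFn I) ξ (spt t z) ^ 2 := by
  have hcont : Continuous fun z ↦ GammaList (List.ofFn I) ξ (spt t z) :=
    (contDiff_gammaList_ofFn (k := 0) (by rwa [zero_add]) hn I).continuous.comp (continuous_spt t)
  have hsupp' : HasCompactSupport fun z ↦ GammaList (List.ofFn I) ξ (spt t z) ^ 2 :=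
    ((hasCompactSupport_gammaList hsupp _).comp_isClosedEmbedding
      (isClosedEmbedding_spt t)).comp_left (zero_pow two_ne_zero)
  exact ((hw.comp (continuous_rad3.sub continuous_const)).mul
    (hcont.pow 2)).integrable_of_hasCompactSupport hsupp'.mul_left

lemma integrable_weight_mul_gammaDensity (hw : Continuous w) (hξ : ContDiff ℝ m ξ)
    (hsupp : HasCompactSupport ξ) (t : ℝ) :
    Integrable fun z ↦ w (rad3 z - t) * gammaDensity m ξ (spt t z) := by
  simp only [gammaDensity, Finset.mul_sum]
  exact integrable_finsetSum _ fun n hn ↦ integrable_finsetSum _ fun I _ ↦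
    integrable_weight_mul_gammaList_sq hw hξ hsupp t hn I

lemma integral_weight_mul_gammaDensity (hw : Continuous w) (hξ : ContDiff ℝ m ξ)
    (hsupp : HasCompactSupport ξ) (t : ℝ) :
    ∫ z, w (rad3 z - t) * gammaDensity m ξ (spt t z) =
      ∑ n ∈ Finset.range (m + 1), ∑ I : Fin n → Fin 11,
        ∫ z, w (rad3 z - t) * GammaList (List.ofFn I) ξ (spt t z) ^ 2 := by
  have hint : ∀ n ∈ Finset.range (m + 1), ∀ I : Fin n → Fin 11, _ := fun n hn I ↦
    integrable_weight_mul_gammaList_sq hw hξ hsupp t hn I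
  simp only [gammaDensity, Finset.mul_sum]
  rw [integral_finsetSum _ fun n hn ↦ integrable_finsetSum _ fun I _ ↦ hint n hn I]
  exact Finset.sum_congr rfl fun n hn ↦ integral_finsetSum _ fun I _ ↦ hint n hn I

end Integral

end GammaDensity

section Chart

lemma mul_integral_comp_le_integral {E : Type*} [NormedAddCommGroup E] [NormedSpace ℝ E]
    [FiniteDimensional ℝ E] [MeasurableSpace E] [BorelSpace E] {μ : Measure E}
    [μ.IsAddHaarMeasure] {K : Set E} (hK : MeasurableSet K) {Ψ : E → E} {Ψ' : E → E →L[ℝ] E}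
    (hΨ : ∀ s ∈ K, HasFDerivWithinAt Ψ (Ψ' s) K s) (hinj : InjOn Ψ K) {J : ℝ} (hJ : 0 ≤ J)
    (hdet : ∀ s ∈ K, J ≤ |(Ψ' s).det|) {f : E → ℝ} (hf : ∀ z, 0 ≤ f z) (hfi : Integrable f μ) :
    J * ∫ s in K, f (Ψ s) ∂μ ≤ ∫ z, f z ∂μ := by
  calc J * ∫ s in K, f (Ψ s) ∂μ = ∫ s in K, J * f (Ψ s) ∂μ := (integral_const_mul _ _).symm
    _ ≤ ∫ s in K, |(Ψ' s).det| • f (Ψ s) ∂μ :=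
        integral_mono_of_nonneg (.of_forall fun s ↦ mul_nonneg hJ (hf _))
          ((integrableOn_image_iff_integrableOn_abs_det_fderiv_smul μ hK hΨ hinj f).1
            hfi.integrableOn)
          ((ae_restrict_iff' hK).2 (.of_forall fun s hs ↦
            mul_le_mul_of_nonneg_right (hdet s hs) (hf _)))
    _ = ∫ z in Ψ '' K, f z ∂μ :=
        (integral_image_eq_integral_abs_det_fderiv_smul μ hK hΨ hinj f).symm
    _ ≤ ∫ z, f z ∂μ := setIntegral_le_integral hfi (.of_forall hf)

/-- A parametrization `Ψ` of a piece of `ℝ³` by the unit cube, based at `Ψ 0` and adapted to the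
Minkowskian fields at time `t`: the coordinate fields of `Ψ`, whose derivative is `Ψ'`, are
combinations of Minkowskian fields with coefficients at most `κ`, the Jacobian is at least `J`, and
`|z| - t` varies over the piece by at most half of `1 + ||Ψ 0| - t|`. -/
structure IsAdaptedChart (t κ J : ℝ) (Ψ : (Fin 3 → ℝ) → Fin 3 → ℝ)
    (Ψ' : (Fin 3 → ℝ) → (Fin 3 → ℝ) →L[ℝ] (Fin 3 → ℝ)) : Prop where
  hasFDerivAt : ∀ s, HasFDerivAt Ψ (Ψ' s) s
  injOn : InjOn Ψ (Icc 0 1)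
  le_abs_det : ∀ s ∈ Icc (0 : Fin 3 → ℝ) 1, J ≤ |(Ψ' s).det|
  isMinkComb : ∀ s ∈ Icc (0 : Fin 3 → ℝ) 1, ∀ i,
    IsMinkComb κ (spt t (Ψ s)) (spt 0 (Ψ' s (Pi.single i 1)))
  abs_rad3_sub_le : ∀ s ∈ Icc (0 : Fin 3 → ℝ) 1,
    |rad3 (Ψ s) - rad3 (Ψ 0)| ≤ (1 + |rad3 (Ψ 0) - t|) / 2

namespace IsAdaptedChart

variable {t κ J : ℝ} {Ψ : (Fin 3 → ℝ) → Fin 3 → ℝ}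
  {Ψ' : (Fin 3 → ℝ) → (Fin 3 → ℝ) →L[ℝ] (Fin 3 → ℝ)} {ξ : (Fin 4 → ℝ) → ℝ} {w : ℝ → ℝ}

lemma coeff_nonneg (h : IsAdaptedChart t κ J Ψ Ψ') : 0 ≤ κ :=
  let ⟨_, hc, _⟩ := h.isMinkComb 0 ⟨le_rfl, zero_le_one⟩ 0
  (abs_nonneg _).trans (hc 0)

lemma continuous (h : IsAdaptedChart t κ J Ψ Ψ') : Continuous Ψ :=
  continuous_iff_continuousAt.2 fun s ↦ (h.hasFDerivAt s).continuousAt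

lemma sq_apply_le (h : IsAdaptedChart t κ J Ψ Ψ') (hξ : ContDiff ℝ 3 ξ) :
    ξ (spt t (Ψ 0)) ^ 2 ≤
      (1 + 12 * κ) ^ 3 * ∫ s in Icc (0 : Fin 3 → ℝ) 1, gammaDensity 3 ξ (spt t (Ψ s)) := by
  have hchain : ∀ s, HasFDerivAt (fun s ↦ spt t (Ψ s)) (spatialEmb.comp (Ψ' s)) s := fun s ↦
    (hasFDerivAt_spt t (Ψ s)).comp s (h.hasFDerivAt s)
  have hdiff : ∀ m < 3, Differentiable ℝ (gammaDensity m ξ) := fun m hm ↦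
    (contDiff_gammaDensity (k := 1) (hξ.of_le (by norm_cast; omega))).differentiable (by simp)
  have hcont : ∀ m ≤ 3, Continuous (gammaDensity m ξ) := fun m hm ↦
    (contDiff_gammaDensity (k := 0) (hξ.of_le (by norm_cast; omega))).continuous
  rw [← gammaDensity_zero]
  refine le_pow_card_mul_integral_Icc (G := fun m s ↦ gammaDensity m ξ (spt t (Ψ s)))
    (mul_nonneg (by norm_num) h.coeff_nonneg)
    (fun m hm ↦ (hcont m hm).comp ((continuous_spt t).comp h.continuous))
    (fun m s ↦ gammaDensity_nonneg m ξ _) (fun m s ↦ gammaDensity_le_succ m ξ _)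
    (fun m hm s ↦ (hdiff m hm _).comp s (hchain s).differentiableAt) (fun m hm s hs i ↦ ?_)
    ⟨le_rfl, zero_le_one⟩
  have hfderiv : HasFDerivAt (fun s ↦ gammaDensity m ξ (spt t (Ψ s))) _ s :=
    (hdiff m hm _).hasFDerivAt.comp s (hchain s)
  rw [hfderiv.fderiv]
  exact (h.isMinkComb s hs i).abs_fderiv_gammaDensity_le (hξ.of_le (by norm_cast))

lemma weight_mul_integral_le (h : IsAdaptedChart t κ J Ψ Ψ') {K : ℝ}
    (hw : IsSlowlyVaryingWeight K w) (hξ : ContDiff ℝ 3 ξ) :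
    w (rad3 (Ψ 0) - t) * ∫ s in Icc (0 : Fin 3 → ℝ) 1, gammaDensity 3 ξ (spt t (Ψ s)) ≤
      K * ∫ s in Icc (0 : Fin 3 → ℝ) 1, w (rad3 (Ψ s) - t) * gammaDensity 3 ξ (spt t (Ψ s)) := by
  rw [← integral_const_mul, ← integral_const_mul]
  refine integral_mono_of_nonneg
    (.of_forall fun s ↦ mul_nonneg (hw.nonneg _) (gammaDensity_nonneg 3 ξ _)) ?_
    ((ae_restrict_iff' measurableSet_Icc).2 (.of_forall fun s hs ↦ ?_))
  · have hE : Continuous (gammaDensity 3 ξ) :=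
      (contDiff_gammaDensity (k := 0) (by exact_mod_cast hξ)).continuous
    exact (continuous_const.mul
      ((hw.continuous.comp ((continuous_rad3.comp h.continuous).sub continuous_const)).mul
        (hE.comp ((continuous_spt t).comp h.continuous)))).integrableOn_Icc
  · dsimp only
    rw [← mul_assoc]
    exact mul_le_mul_of_nonneg_right (hw.le_mul _ _ (by simpa using h.abs_rad3_sub_le s hs))
      (gammaDensity_nonneg 3 ξ _)

theorem mul_weight_mul_sq_le (h : IsAdaptedChart t κ J Ψ Ψ') (hJ : 0 ≤ J) {K : ℝ}
    (hw : IsSlowlyVaryingWeight K w) (hξ : ContDiff ℝ 3 ξ) (hsupp : HasCompactSupport ξ) :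
    J * (w (rad3 (Ψ 0) - t) * ξ (spt t (Ψ 0)) ^ 2) ≤
      (1 + 12 * κ) ^ 3 * K * ∫ z, w (rad3 z - t) * gammaDensity 3 ξ (spt t z) := by
  have hκ := h.coeff_nonneg
  have hK := zero_le_one.trans hw.one_le
  set W := w (rad3 (Ψ 0) - t)
  set E := fun z ↦ w (rad3 z - t) * gammaDensity 3 ξ (spt t z)
  have hcov : J * ∫ s in Icc (0 : Fin 3 → ℝ) 1, E (Ψ s) ≤ ∫ z, E z :=
    mul_integral_comp_le_integral measurableSet_Icc
      (fun s _ ↦ (h.hasFDerivAt s).hasFDerivWithinAt) h.injOn hJ h.le_abs_det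
      (fun z ↦ mul_nonneg (hw.nonneg _) (gammaDensity_nonneg 3 ξ _))
      (integrable_weight_mul_gammaDensity hw.continuous (by exact_mod_cast hξ) hsupp t)
  calc J * (W * ξ (spt t (Ψ 0)) ^ 2)
      ≤ J * (W * ((1 + 12 * κ) ^ 3 *
          ∫ s in Icc (0 : Fin 3 → ℝ) 1, gammaDensity 3 ξ (spt t (Ψ s)))) := by
        gcongr
        · exact hw.nonneg _
        · exact h.sq_apply_le hξ
    _ = (1 + 12 * κ) ^ 3 * J *
          (W * ∫ s in Icc (0 : Fin 3 → ℝ) 1, gammaDensity 3 ξ (spt t (Ψ s))) := by ring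
    _ ≤ (1 + 12 * κ) ^ 3 * J * (K * ∫ s in Icc (0 : Fin 3 → ℝ) 1, E (Ψ s)) := by
        gcongr ?_ * ?_
        exact h.weight_mul_integral_le hw hξ
    _ = (1 + 12 * κ) ^ 3 * K * (J * ∫ s in Icc (0 : Fin 3 → ℝ) 1, E (Ψ s)) := by ring
    _ ≤ (1 + 12 * κ) ^ 3 * K * ∫ z, E z := by gcongr

end IsAdaptedChart

end Chart

section TranslationChart

lemma rad3_le_two_of_mem_Icc {s : Fin 3 → ℝ} (hs : s ∈ Icc (0 : Fin 3 → ℝ) 1) : rad3 s ≤ 2 := by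
  have hsq : ∀ i, s i * s i ≤ 1 := fun i ↦ mul_le_one₀ (hs.2 i) (hs.1 i) (hs.2 i)
  refine le_of_sq_le_sq ?_ zero_le_two
  rw [rad3_sq, vec3_dotProduct]
  linarith [hsq 0, hsq 1, hsq 2]

lemma isAdaptedChart_translation {t L : ℝ} (ht : 0 ≤ t) {x : Fin 3 → ℝ} (hL : 0 < L)
    (hLx : 4 * L ≤ 1 + |rad3 x - t|) :
    IsAdaptedChart t 1 (L ^ 3) (fun s ↦ x + L • s)
      (fun _ ↦ L • ContinuousLinearMap.id ℝ (Fin 3 → ℝ)) := by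
  have hrad : ∀ s ∈ Icc (0 : Fin 3 → ℝ) 1,
      |rad3 (x + L • s) - rad3 x| ≤ (1 + |rad3 x - t|) / 2 := by
    intro s hs
    calc |rad3 (x + L • s) - rad3 x| ≤ rad3 (L • s) := by
          simpa using abs_rad3_sub_rad3_le (x + L • s) x
      _ = L * rad3 s := by rw [rad3_smul, abs_of_pos hL]
      _ ≤ L * 2 := by gcongr; exact rad3_le_two_of_mem_Icc hs
      _ ≤ _ := by linarith
  refine ⟨fun s ↦ ((hasFDerivAt_id s).const_smul L).const_add x, ?_, fun s _ ↦ ?_, fun s hs i ↦ ?_,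
    fun s hs ↦ ?_⟩
  · exact fun s _ s' _ h ↦ smul_right_injective _ hL.ne' (add_left_cancel h)
  · have hdet : (L • ContinuousLinearMap.id ℝ (Fin 3 → ℝ)).det = L ^ 3 := by
      simp [ContinuousLinearMap.det]
    rw [hdet]
    exact le_abs_self _
  · refine isMinkComb_one_of_four_mul_rad3_le ht (hrad s hs) ?_
    have hunit : rad3 (Pi.single i 1) = 1 := by
      simp [rad3_eq_norm]
    simpa [rad3_smul, hunit, abs_of_pos hL] using hLx
  · simpa using hrad s hs

end TranslationChart

section OrthogonalGroup

variable {n : Type*} [Fintype n] [DecidableEq n] {A : Matrix n n ℝ}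

lemma mulVec_dotProduct_mulVec_of_mem_orthogonalGroup (hA : A ∈ orthogonalGroup n ℝ)
    (v w : n → ℝ) : (A *ᵥ v) ⬝ᵥ (A *ᵥ w) = v ⬝ᵥ w := by
  rw [dotProduct_mulVec, vecMul_mulVec, ← dotProduct_mulVec, (mem_orthogonalGroup_iff' n ℝ).1 hA,
    one_mulVec]

lemma rad3_mulVec_of_mem_orthogonalGroup {A : Matrix (Fin 3) (Fin 3) ℝ}
    (hA : A ∈ orthogonalGroup (Fin 3) ℝ) (v : Fin 3 → ℝ) : rad3 (A *ᵥ v) = rad3 v := by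
  rw [← sq_eq_sq₀ (rad3_nonneg _) (rad3_nonneg _), rad3_sq, rad3_sq,
    mulVec_dotProduct_mulVec_of_mem_orthogonalGroup hA]

lemma det_sq_of_mem_orthogonalGroup (hA : A ∈ orthogonalGroup n ℝ) : A.det ^ 2 = 1 := by
  have h := congrArg det ((mem_orthogonalGroup_iff n ℝ).1 hA)
  rwa [det_mul, det_transpose, det_one, ← sq] at h

-- The witness is the Householder reflection in the hyperplane orthogonal to `v - w`.
lemma exists_mem_orthogonalGroup_mulVec_eq {v w : n → ℝ} (h : v ⬝ᵥ v = w ⬝ᵥ w) :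
    ∃ A ∈ orthogonalGroup n ℝ, A *ᵥ v = w := by
  set u := v - w with hu
  have huu : u ⬝ᵥ u = 2 * (u ⬝ᵥ v) := by
    simp only [hu, sub_dotProduct, dotProduct_sub, dotProduct_comm w v]
    linarith
  rcases eq_or_ne u 0 with h0 | h0
  · exact ⟨1, one_mem _, by rw [one_mulVec, sub_eq_zero.1 h0]⟩
  have hne : u ⬝ᵥ u ≠ 0 := mt dotProduct_self_eq_zero.1 h0
  refine ⟨1 - (2 / (u ⬝ᵥ u)) • vecMulVec u u, ?_, ?_⟩
  · have hsq : vecMulVec u u * vecMulVec u u = (u ⬝ᵥ u) • vecMulVec u u := by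
      rw [vecMulVec_mul_vecMulVec, vecMulVec_smul]
    rw [mem_orthogonalGroup_iff, transpose_sub, transpose_one, transpose_smul, transpose_vecMulVec,
      sub_mul, one_mul, mul_sub, mul_one, smul_mul_smul_comm, hsq, smul_smul, mul_assoc,
      div_mul_cancel₀ _ hne]
    module
  · rw [sub_mulVec, one_mulVec, smul_mulVec, vecMulVec_mulVec, op_smul_eq_smul, smul_smul,
      div_mul_eq_mul_div, ← huu, div_self hne, one_smul, hu, sub_sub_cancel]

end OrthogonalGroup

section SphericalChart

/-- Spherical coordinates about the first axis, with radius `r + L s₀`, latitude `s₁` and longitude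
`s₂`. -/
noncomputable def sphericalMap (r L : ℝ) (s : Fin 3 → ℝ) : Fin 3 → ℝ :=
  (r + L * s 0) • ![Real.cos (s 1) * Real.cos (s 2), Real.cos (s 1) * Real.sin (s 2),
    Real.sin (s 1)]

/-- The Jacobian matrix of `sphericalMap r L`. -/
noncomputable def sphericalJacobian (r L : ℝ) (s : Fin 3 → ℝ) : Matrix (Fin 3) (Fin 3) ℝ :=
  !![L * (Real.cos (s 1) * Real.cos (s 2)), -((r + L * s 0) * (Real.sin (s 1) * Real.cos (s 2))),
      -((r + L * s 0) * (Real.cos (s 1) * Real.sin (s 2)));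
    L * (Real.cos (s 1) * Real.sin (s 2)), -((r + L * s 0) * (Real.sin (s 1) * Real.sin (s 2))),
      (r + L * s 0) * (Real.cos (s 1) * Real.cos (s 2));
    L * Real.sin (s 1), (r + L * s 0) * Real.cos (s 1), 0]

lemma hasFDerivAt_sphericalMap (r L : ℝ) (s : Fin 3 → ℝ) :
    HasFDerivAt (sphericalMap r L) (toLin' (sphericalJacobian r L s)).toContinuousLinearMap s := by
  have hcoord : ∀ i : Fin 3, HasFDerivAt (fun s : Fin 3 → ℝ ↦ s i)
      (ContinuousLinearMap.proj (R := ℝ) (φ := fun _ : Fin 3 ↦ ℝ) i) s :=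
    fun i ↦ hasFDerivAt_apply i s
  have hρ := ((hcoord 0).const_mul L).const_add r
  rw [hasFDerivAt_pi']
  intro i
  fin_cases i
  · refine (hρ.mul ((hcoord 1).cos.mul (hcoord 2).cos)).congr_fderiv (ContinuousLinearMap.ext ?_)
    intro v
    simp only [sphericalJacobian, Fin.zero_eta, ContinuousLinearMap.comp_apply,
      LinearMap.coe_toContinuousLinearMap', toLin'_apply, mulVec, vec3_dotProduct, Matrix.of_apply,
      ContinuousLinearMap.proj_apply, _root_.add_apply, _root_.smul_apply, smul_eq_mul,
      Pi.mul_apply, Matrix.cons_val]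
    ring
  · refine (hρ.mul ((hcoord 1).cos.mul (hcoord 2).sin)).congr_fderiv (ContinuousLinearMap.ext ?_)
    intro v
    simp only [sphericalJacobian, Fin.mk_one, ContinuousLinearMap.comp_apply,
      LinearMap.coe_toContinuousLinearMap', toLin'_apply, mulVec, vec3_dotProduct, Matrix.of_apply,
      ContinuousLinearMap.proj_apply, _root_.add_apply, _root_.smul_apply, smul_eq_mul,
      Pi.mul_apply, Matrix.cons_val]
    ring
  · refine (hρ.mul (hcoord 1).sin).congr_fderiv (ContinuousLinearMap.ext ?_)
    intro v
    simp only [sphericalJacobian, Fin.reduceFinMk, ContinuousLinearMap.comp_apply,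
      LinearMap.coe_toContinuousLinearMap', toLin'_apply, mulVec, vec3_dotProduct, Matrix.of_apply,
      ContinuousLinearMap.proj_apply, _root_.add_apply, _root_.smul_apply, smul_eq_mul,
      Matrix.cons_val]
    ring

lemma transpose_mul_self_sphericalJacobian (r L : ℝ) (s : Fin 3 → ℝ) :
    (sphericalJacobian r L s)ᵀ * sphericalJacobian r L s =
      diagonal ![L ^ 2, (r + L * s 0) ^ 2, ((r + L * s 0) * Real.cos (s 1)) ^ 2] := by
  have h1 := Real.sin_sq_add_cos_sq (s 1)
  have h2 := Real.sin_sq_add_cos_sq (s 2)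
  ext i j
  fin_cases i <;> fin_cases j <;>
    simp only [sphericalJacobian, Fin.zero_eta, Fin.mk_one, Fin.reduceFinMk, mul_apply,
      transpose_apply, of_apply, Fin.sum_univ_three, diagonal_apply, Matrix.cons_val] <;> grind

lemma sphericalMap_vecMul_sphericalJacobian (r L : ℝ) (s : Fin 3 → ℝ) :
    sphericalMap r L s ᵥ* sphericalJacobian r L s = ![L * (r + L * s 0), 0, 0] := by
  have h1 := Real.sin_sq_add_cos_sq (s 1)
  have h2 := Real.sin_sq_add_cos_sq (s 2)
  ext i
  fin_cases i <;>
    simp only [sphericalJacobian, sphericalMap, Fin.zero_eta, Fin.mk_one, Fin.reduceFinMk, vecMul,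
      vec3_dotProduct, of_apply, Pi.smul_apply, smul_eq_mul, Matrix.cons_val] <;> grind

lemma rad3_sphericalMap (r L : ℝ) (s : Fin 3 → ℝ) : rad3 (sphericalMap r L s) = |r + L * s 0| := by
  have h1 := Real.sin_sq_add_cos_sq (s 1)
  have h2 := Real.sin_sq_add_cos_sq (s 2)
  rw [← sq_eq_sq₀ (rad3_nonneg _) (abs_nonneg _), rad3_sq, sq_abs, vec3_dotProduct]
  simp only [sphericalMap, Pi.smul_apply, smul_eq_mul, Matrix.cons_val]
  grind

variable {t r L : ℝ} {s : Fin 3 → ℝ}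

lemma half_le_cos_of_mem_Icc {θ : ℝ} (hθ : θ ∈ Icc (0 : ℝ) 1) : 1 / 2 ≤ Real.cos θ := by
  have hsq : θ ^ 2 ≤ 1 := pow_le_one₀ hθ.1 hθ.2
  linarith [Real.one_sub_sq_div_two_le_cos (x := θ)]

lemma injOn_sin_Icc_zero_one : InjOn Real.sin (Icc 0 1) :=
  Real.injOn_sin.mono (Icc_subset_Icc (by linarith [Real.pi_pos]) (by linarith [Real.two_le_pi]))

lemma injOn_sphericalMap (hr : 0 < r) (hL : 0 < L) : InjOn (sphericalMap r L) (Icc 0 1) := by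
  intro s hs s' hs' h
  have hρ : ∀ σ ∈ Icc (0 : Fin 3 → ℝ) 1, 0 < r + L * σ 0 := fun σ hσ ↦
    add_pos_of_pos_of_nonneg hr (mul_nonneg hL.le (hσ.1 0))
  have hrad : r + L * s 0 = r + L * s' 0 := by
    simpa only [rad3_sphericalMap, abs_of_pos (hρ s hs), abs_of_pos (hρ s' hs')] using
      congrArg rad3 h
  rw [sphericalMap, sphericalMap, hrad] at h
  have hdir := smul_right_injective _ (hρ s' hs').ne' h
  have h0 : s 0 = s' 0 := mul_left_cancel₀ hL.ne' (add_left_cancel hrad)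
  have h1 : s 1 = s' 1 := injOn_sin_Icc_zero_one ⟨hs.1 1, hs.2 1⟩ ⟨hs'.1 1, hs'.2 1⟩
    (congrFun hdir 2)
  have hcos : Real.cos (s' 1) ≠ 0 := by
    linarith [half_le_cos_of_mem_Icc ⟨hs'.1 1, hs'.2 1⟩]
  have hlon : Real.cos (s 1) * Real.sin (s 2) = Real.cos (s' 1) * Real.sin (s' 2) :=
    congrFun hdir 1
  rw [h1] at hlon
  have h2 : s 2 = s' 2 := injOn_sin_Icc_zero_one ⟨hs.1 2, hs.2 2⟩ ⟨hs'.1 2, hs'.2 2⟩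
    (mul_left_cancel₀ hcos hlon)
  funext i
  fin_cases i
  exacts [h0, h1, h2]

lemma det_sphericalJacobian_sq (r L : ℝ) (s : Fin 3 → ℝ) :
    (sphericalJacobian r L s).det ^ 2 = (L * (r + L * s 0) ^ 2 * Real.cos (s 1)) ^ 2 := by
  have h := congrArg det (transpose_mul_self_sphericalJacobian r L s)
  rw [det_mul, det_transpose, det_diagonal, Fin.prod_univ_three] at h
  rw [sq, h]
  simp only [Matrix.cons_val]
  ring

variable {A : Matrix (Fin 3) (Fin 3) ℝ}

lemma rad3_col_sphericalJacobian_sq (r L : ℝ) (s : Fin 3 → ℝ) (i : Fin 3) :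
    rad3 ((sphericalJacobian r L s).col i) ^ 2 =
      ![L ^ 2, (r + L * s 0) ^ 2, ((r + L * s 0) * Real.cos (s 1)) ^ 2] i := by
  have h := congrFun₂ (transpose_mul_self_sphericalJacobian r L s) i i
  rw [diagonal_apply_eq] at h
  rw [rad3_sq, ← h]
  rfl

lemma rad3_mulVec_sphericalMap (hA : A ∈ orthogonalGroup (Fin 3) ℝ) (hr : 0 < r) (hL : 0 < L)
    (hs : s ∈ Icc (0 : Fin 3 → ℝ) 1) : rad3 (A *ᵥ sphericalMap r L s) = r + L * s 0 := by
  rw [rad3_mulVec_of_mem_orthogonalGroup hA, rad3_sphericalMap, abs_of_pos]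
  exact add_pos_of_pos_of_nonneg hr (mul_nonneg hL.le (hs.1 0))

lemma isMinkComb_mulVec_sphericalJacobian (hA : A ∈ orthogonalGroup (Fin 3) ℝ) (t : ℝ)
    (hρ : r + L * s 0 ≠ 0) {i : Fin 3} (hi : i ≠ 0) :
    IsMinkComb 1 (spt t (A *ᵥ sphericalMap r L s))
      (spt 0 (A *ᵥ (sphericalJacobian r L s).col i)) := by
  have hmap : 0 < rad3 (sphericalMap r L s) := by
    rw [rad3_sphericalMap]
    exact abs_pos.2 hρ
  have horth : sphericalMap r L s ⬝ᵥ (sphericalJacobian r L s).col i = 0 := by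
    have h := congrFun (sphericalMap_vecMul_sphericalJacobian r L s) i
    fin_cases i
    exacts [absurd rfl hi, h, h]
  have hcol : rad3 ((sphericalJacobian r L s).col i) ≤ rad3 (sphericalMap r L s) := by
    refine le_of_sq_le_sq ?_ hmap.le
    rw [rad3_col_sphericalJacobian_sq, rad3_sphericalMap, sq_abs]
    fin_cases i
    · exact absurd rfl hi
    · exact le_rfl
    · exact (mul_pow _ _ 2).trans_le
        (mul_le_of_le_one_right (sq_nonneg _) (Real.cos_sq_le_one _))
  refine (isMinkComb_rotation t ?_ ?_).mono ?_
  · rwa [rad3_mulVec_of_mem_orthogonalGroup hA]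
  · rw [mulVec_dotProduct_mulVec_of_mem_orthogonalGroup hA, horth]
  · rwa [rad3_mulVec_of_mem_orthogonalGroup hA, rad3_mulVec_of_mem_orthogonalGroup hA,
      div_le_one hmap]

lemma le_abs_det_mul_sphericalJacobian (hA : A ∈ orthogonalGroup (Fin 3) ℝ) (hr : 0 < r)
    (hL : 0 < L) (hs : s ∈ Icc (0 : Fin 3 → ℝ) 1) :
    L * r ^ 2 / 2 ≤ |(A * sphericalJacobian r L s).det| := by
  have hcos : 1 / 2 ≤ Real.cos (s 1) := half_le_cos_of_mem_Icc ⟨hs.1 1, hs.2 1⟩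
  have habs : |(A * sphericalJacobian r L s).det| = |L * (r + L * s 0) ^ 2 * Real.cos (s 1)| := by
    rw [← sq_eq_sq_iff_abs_eq_abs, det_mul, mul_pow, det_sq_of_mem_orthogonalGroup hA, one_mul,
      det_sphericalJacobian_sq]
  rw [habs]
  refine le_trans ?_ (le_abs_self _)
  calc L * r ^ 2 / 2 = L * r ^ 2 * (1 / 2) := by ring
    _ ≤ L * (r + L * s 0) ^ 2 * Real.cos (s 1) := by
        gcongr
        exact le_add_of_nonneg_right (mul_nonneg hL.le (hs.1 0))

lemma isAdaptedChart_spherical (hA : A ∈ orthogonalGroup (Fin 3) ℝ) (ht : 0 ≤ t) (hr : 0 < r)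
    (hL : 0 < L) (hLr : 4 * L ≤ 1 + |r - t|) :
    IsAdaptedChart t 1 (L * r ^ 2 / 2) (fun s ↦ A *ᵥ sphericalMap r L s)
      (fun s ↦ (toLin' (A * sphericalJacobian r L s)).toContinuousLinearMap) := by
  have hbase : rad3 (A *ᵥ sphericalMap r L 0) = r := by
    rw [rad3_mulVec_sphericalMap hA hr hL ⟨le_rfl, zero_le_one⟩, Pi.zero_apply, mul_zero, add_zero]
  have hrad : ∀ s ∈ Icc (0 : Fin 3 → ℝ) 1,
      |rad3 (A *ᵥ sphericalMap r L s) - r| ≤ (1 + |r - t|) / 2 := by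
    intro s hs
    have hs0 : 0 ≤ L * s 0 := mul_nonneg hL.le (hs.1 0)
    have hs1 : L * s 0 ≤ L := mul_le_of_le_one_right hL.le (hs.2 0)
    rw [rad3_mulVec_sphericalMap hA hr hL hs, add_sub_cancel_left, abs_of_nonneg hs0]
    linarith
  have hA' : Injective (A *ᵥ ·) := mulVec_injective_of_det_ne_zero fun h ↦ by
    simpa [h] using det_sq_of_mem_orthogonalGroup hA
  refine ⟨fun s ↦ ?_, hA'.comp_injOn (injOn_sphericalMap hr hL), fun s hs ↦ ?_, fun s hs i ↦ ?_,
    fun s hs ↦ ?_⟩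
  · rw [toLin'_mul]
    exact (toLin' A).toContinuousLinearMap.hasFDerivAt.comp s (hasFDerivAt_sphericalMap r L s)
  · rw [LinearMap.det_toContinuousLinearMap, LinearMap.det_toLin']
    exact le_abs_det_mul_sphericalJacobian hA hr hL hs
  · have happly : (toLin' (A * sphericalJacobian r L s)).toContinuousLinearMap (Pi.single i 1) =
        A *ᵥ (sphericalJacobian r L s).col i := by
      rw [LinearMap.coe_toContinuousLinearMap', toLin'_apply, ← mulVec_mulVec, mulVec_single_one]
    rw [happly]
    rcases eq_or_ne i 0 with rfl | hi
    · refine isMinkComb_one_of_four_mul_rad3_le ht (hrad s hs) ?_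
      have hcol : rad3 ((sphericalJacobian r L s).col 0) = L := by
        rw [← sq_eq_sq₀ (rad3_nonneg _) hL.le, rad3_col_sphericalJacobian_sq]
        rfl
      rwa [rad3_mulVec_of_mem_orthogonalGroup hA, hcol]
    · refine isMinkComb_mulVec_sphericalJacobian hA t ?_ hi
      exact (add_pos_of_pos_of_nonneg hr (mul_nonneg hL.le (hs.1 0))).ne'
  · rw [hbase]
    exact hrad s hs

end SphericalChart

lemma exists_isAdaptedChart {t : ℝ} (ht : 0 ≤ t) (x : Fin 3 → ℝ) :
    ∃ J Ψ Ψ', IsAdaptedChart t 1 J Ψ Ψ' ∧ Ψ 0 = x ∧ 0 ≤ J ∧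
      (1 + t + rad3 x) ^ 2 * (1 + |rad3 x - t|) ≤ 256 * J := by
  set r := rad3 x
  obtain ⟨L, hL⟩ : ∃ L, 1 + |r - t| = 4 * L := ⟨(1 + |r - t|) / 4, by ring⟩
  have hr : 0 ≤ r := rad3_nonneg x
  have hL0 : 0 < L := by linarith [abs_nonneg (r - t)]
  rcases le_total (1 + t + r) (8 * L) with hfar | hnear
  · refine ⟨L ^ 3, _, _, isAdaptedChart_translation ht hL0 hL.ge, by simp, by positivity, ?_⟩
    rw [hL]
    calc (1 + t + r) ^ 2 * (4 * L) ≤ (8 * L) ^ 2 * (4 * L) := by gcongr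
      _ = 256 * L ^ 3 := by ring
  · have hrt : 1 + t + r ≤ 4 * r := by linarith [neg_abs_le (r - t)]
    have hr0 : 0 < r := by linarith
    obtain ⟨A, hA, hAx⟩ : ∃ A ∈ orthogonalGroup (Fin 3) ℝ, A *ᵥ sphericalMap r L 0 = x := by
      refine exists_mem_orthogonalGroup_mulVec_eq ?_
      rw [← rad3_sq, rad3_sphericalMap, ← rad3_sq, sq_abs, Pi.zero_apply, mul_zero, add_zero]
    refine ⟨L * r ^ 2 / 2, _, _, isAdaptedChart_spherical hA ht hr0 hL0 hL.ge, hAx, by positivity,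
      ?_⟩
    rw [hL]
    calc (1 + t + r) ^ 2 * (4 * L) ≤ (4 * r) ^ 2 * (4 * L) := by gcongr
      _ = 128 * (L * r ^ 2 / 2) := by ring
      _ ≤ 256 * (L * r ^ 2 / 2) := by gcongr; norm_num

section KlainermanSobolev

lemma sqrt_sum_le_sum_sqrt {ι : Type*} {s : Finset ι} {f : ι → ℝ} (hf : ∀ i ∈ s, 0 ≤ f i) :
    √(∑ i ∈ s, f i) ≤ ∑ i ∈ s, √(f i) := by
  refine Real.sqrt_le_iff.2 ⟨Finset.sum_nonneg fun _ _ ↦ Real.sqrt_nonneg _, ?_⟩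
  calc ∑ i ∈ s, f i = ∑ i ∈ s, √(f i) ^ 2 :=
        Finset.sum_congr rfl fun i hi ↦ (Real.sq_sqrt (hf i hi)).symm
    _ ≤ (∑ i ∈ s, √(f i)) ^ 2 :=
        Finset.sum_sq_le_sq_sum_of_nonneg fun _ _ ↦ Real.sqrt_nonneg _

variable {K : ℝ} {w : ℝ → ℝ}

theorem sq_mul_weight_le_integral_gammaDensity (hw : IsSlowlyVaryingWeight K w)
    {ξ : (Fin 4 → ℝ) → ℝ} (hξ : ContDiff ℝ 3 ξ) (hsupp : HasCompactSupport ξ) {t : ℝ} (ht : 0 ≤ t)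
    (x : Fin 3 → ℝ) :
    ξ (spt t x) ^ 2 * (1 + t + rad3 x) ^ 2 * (1 + |rad3 x - t|) * w (rad3 x - t) ≤
      256 * 13 ^ 3 * K * ∫ z, w (rad3 z - t) * gammaDensity 3 ξ (spt t z) := by
  obtain ⟨J, Ψ, Ψ', hΨ, rfl, hJ, hle⟩ := exists_isAdaptedChart ht x
  set q := rad3 (Ψ 0) - t
  calc ξ (spt t (Ψ 0)) ^ 2 * (1 + t + rad3 (Ψ 0)) ^ 2 * (1 + |q|) * w q
      = (1 + t + rad3 (Ψ 0)) ^ 2 * (1 + |q|) * (w q * ξ (spt t (Ψ 0)) ^ 2) := by ring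
    _ ≤ 256 * J * (w q * ξ (spt t (Ψ 0)) ^ 2) :=
        mul_le_mul_of_nonneg_right hle (mul_nonneg (hw.nonneg q) (sq_nonneg _))
    _ = 256 * (J * (w q * ξ (spt t (Ψ 0)) ^ 2)) := mul_assoc _ _ _
    _ ≤ 256 * ((1 + 12 * 1) ^ 3 * K * ∫ z, w (rad3 z - t) * gammaDensity 3 ξ (spt t z)) :=
        mul_le_mul_of_nonneg_left (hΨ.mul_weight_mul_sq_le hJ hw hξ hsupp) (by norm_num)
    _ = 256 * 13 ^ 3 * K * ∫ z, w (rad3 z - t) * gammaDensity 3 ξ (spt t z) := by ring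

theorem stmt6_general (hw : IsSlowlyVaryingWeight K w) :
    ∃ C > (0 : ℝ), ∀ ξ : (Fin 4 → ℝ) → ℝ, ContDiff ℝ 3 ξ → HasCompactSupport ξ →
      ∀ t : ℝ, 0 ≤ t → ∀ x : Fin 3 → ℝ,
        |ξ (spt t x)| * (1 + t + rad3 x) * (1 + |rad3 x - t|) ^ ((1 : ℝ) / 2)
            * (w (rad3 x - t)) ^ ((1 : ℝ) / 2)
          ≤ C * ∑ n ∈ Finset.range 4, ∑ I : Fin n → Fin 11,
              √(∫ z : Fin 3 → ℝ, w (rad3 z - t) * (GammaList (List.ofFn I) ξ (spt t z)) ^ 2) := by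
  have hK := zero_lt_one.trans_le hw.one_le
  refine ⟨√(256 * 13 ^ 3 * K), by positivity, fun ξ hξ hsupp t ht x ↦ ?_⟩
  have hr := rad3_nonneg x
  have hnonneg : ∀ {n : ℕ} (I : Fin n → Fin 11),
      0 ≤ ∫ z, w (rad3 z - t) * GammaList (List.ofFn I) ξ (spt t z) ^ 2 := fun I ↦
    integral_nonneg fun z ↦ mul_nonneg (hw.nonneg _) (sq_nonneg _)
  calc |ξ (spt t x)| * (1 + t + rad3 x) * (1 + |rad3 x - t|) ^ ((1 : ℝ) / 2)
        * (w (rad3 x - t)) ^ ((1 : ℝ) / 2)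
      = √(ξ (spt t x) ^ 2 * (1 + t + rad3 x) ^ 2 * (1 + |rad3 x - t|) * w (rad3 x - t)) := by
        rw [Real.sqrt_mul (by positivity), Real.sqrt_mul (by positivity),
          Real.sqrt_mul (sq_nonneg _), Real.sqrt_sq_eq_abs, Real.sqrt_sq (by positivity),
          Real.sqrt_eq_rpow, Real.sqrt_eq_rpow]
    _ ≤ √(256 * 13 ^ 3 * K * ∫ z, w (rad3 z - t) * gammaDensity 3 ξ (spt t z)) :=
        Real.sqrt_le_sqrt (sq_mul_weight_le_integral_gammaDensity hw hξ hsupp ht x)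
    _ = √(256 * 13 ^ 3 * K) * √(∑ n ∈ Finset.range 4, ∑ I : Fin n → Fin 11,
          ∫ z, w (rad3 z - t) * GammaList (List.ofFn I) ξ (spt t z) ^ 2) := by
        rw [Real.sqrt_mul (by positivity),
          integral_weight_mul_gammaDensity hw.continuous (by exact_mod_cast hξ) hsupp]
    _ ≤ _ := by
        gcongr
        exact (sqrt_sum_le_sum_sqrt fun n _ ↦ Finset.sum_nonneg fun I _ ↦ hnonneg I).trans
          (Finset.sum_le_sum fun n _ ↦ sqrt_sum_le_sum_sqrt fun I _ ↦ hnonneg I)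

end KlainermanSobolev

/-- Weighted Klainerman–Sobolev inequality: for `γ ∈ (0,1/8]` there is
a constant `C` such that for every `ξ ∈ C_c^∞(ℝ^{1+3})`, every `t ≥ 0` and `x ∈ ℝ³`,
`|ξ(t,x)| (1+t+|x|) (1+||x|−t|)^{1/2} w(|x|−t)^{1/2}` is bounded by `C` times the sum of
the weighted `L²(ℝ³)` norms of `Γ^I ξ(t,·)` over all compositions of at most three
Minkowskian commuting vector fields. -/
theorem stmt6 (γ : ℝ) (hγ0 : 0 < γ) (hγ1 : γ ≤ 1 / 8) :
    ∃ C > (0 : ℝ), ∀ ξ : (Fin 4 → ℝ) → ℝ, ContDiff ℝ (⊤ : ℕ∞) ξ → HasCompactSupport ξ →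
      ∀ t : ℝ, 0 ≤ t → ∀ x : Fin 3 → ℝ,
        |ξ (spt t x)| * (1 + t + rad3 x) * (1 + |rad3 x - t|) ^ ((1 : ℝ) / 2)
            * (wgt γ (rad3 x - t)) ^ ((1 : ℝ) / 2)
          ≤ C * ∑ n ∈ Finset.range 4, ∑ I : Fin n → Fin 11,
              Real.sqrt (∫ z : Fin 3 → ℝ,
                wgt γ (rad3 z - t) * (GammaList (List.ofFn I) ξ (spt t z)) ^ 2) := by
  obtain ⟨C, hC, hle⟩ := stmt6_general (isSlowlyVaryingWeight_wgt γ)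
  exact ⟨C, hC, fun ξ hξ ↦ hle ξ (contDiff_infty.1 hξ 3)⟩
end
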